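/- arXiv:2304.10902 — 12 statements merged into one kernel-verified Lean document; each statement's English description precedes it below -/
import Mathlib

section
/- Let f : ℝ^d → ℝ be differentiable with L-Lipschitz gradient, suppose f attains its infimum on a nonempty set S = argmin f, and suppose f satisfies the μ-PL condition: ∥∇f(x)∥² ≥ 2μ(f(x) − min f) for all x. Then f satisfies the error-bound condition with the same constant: ∥∇f(x)∥ ≥ μ · dist(x, S) for all x ∈ ℝ^d, where dist(x, S) = inf_{x* ∈ S} ∥x − x*∥. -/
/-!
The PL inequality says that `h = √(f - min f)` has slope at least `√(μ/2)` off `S = argmin f`.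
Hence `h x ≥ √(μ/2) · dist(x, S)` (quadratic growth), and inserting this into the PL inequality
gives the error bound.

The growth estimate avoids the gradient flow. For `0 < r < √(μ/2)`, the coercive continuous function
`y ↦ h y + r ‖y - x‖` attains its minimum at some `y`. If `y ∉ S`, then `h` is differentiable at `y`
and minimality forces its slope there to be at most `r`, which is excluded (`mem_argmin_of_slope_le`).
So `y ∈ S`, and comparing the values at `y` and `x` gives `r ‖y - x‖ ≤ h x`. Finally `r → √(μ/2)`.
-/

open scoped BigOperators

/-- A point from which `√(f - m)` descends with slope at most `r`, `r ^ 2 < μ / 2`, is, under the PL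
inequality at that point, a point where `f ≤ m`. -/
lemma mem_argmin_of_slope_le {E : Type*} [NormedAddCommGroup E] [InnerProductSpace ℝ E]
    [CompleteSpace E] {f : E → ℝ} {v y : E} {m μ r : ℝ} (hμ : 0 < μ)
    (hrμ : r ^ 2 < μ / 2) (hg : HasGradientAt f v y)
    (hPL : 2 * μ * (f y - m) ≤ ‖v‖ ^ 2)
    (hslope : ∀ z, √(f y - m) - r * ‖z - y‖ ≤ √(f z - m)) : f y ≤ m := by
  by_contra! hlt
  have hpos : 0 < f y - m := by linarith
  have hs : 0 < √(f y - m) := Real.sqrt_pos.2 hpos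
  have hs2 : √(f y - m) ^ 2 = f y - m := Real.sq_sqrt hpos.le
  have hv : 0 < ‖v‖ := by
    have : 0 < ‖v‖ ^ 2 := lt_of_lt_of_le (by positivity) hPL
    exact (norm_nonneg v).lt_of_ne' fun h => by simp [h] at this
  have hline : HasDerivAt (fun t : ℝ => y - t • v) (-v) 0 := by
    simpa using ((hasDerivAt_id (0 : ℝ)).smul_const v).const_sub y
  have hf : HasDerivAt (fun t : ℝ => f (y - t • v)) (-‖v‖ ^ 2) 0 := by
    have h0 : HasFDerivAt f (InnerProductSpace.toDual ℝ E v) (y - (0 : ℝ) • v) := by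
      simpa using hg.hasFDerivAt
    simpa [Function.comp_def, real_inner_self_eq_norm_sq] using h0.comp_hasDerivAt (0 : ℝ) hline
  have hφ := (hf.sub_const m).sqrt (by simpa using hpos.ne')
  have hlim := hφ.tendsto_slope_zero_right
  have key : -(r * ‖v‖) ≤ -‖v‖ ^ 2 / (2 * √(f (y - (0 : ℝ) • v) - m)) := by
    refine ge_of_tendsto hlim ?_
    filter_upwards [self_mem_nhdsWithin] with t ht
    have ht : 0 < t := ht
    have h1 := hslope (y - t • v)
    have h2 : ‖y - t • v - y‖ = t * ‖v‖ := by
      rw [sub_sub_cancel_left, norm_neg, norm_smul, Real.norm_of_nonneg ht.le]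
    rw [h2] at h1
    simp only [zero_add, zero_smul, sub_zero, smul_eq_mul]
    rw [inv_mul_eq_div, le_div_iff₀ ht]
    linarith
  rw [zero_smul, sub_zero, neg_div, neg_le_neg_iff, div_le_iff₀ (by positivity)] at key
  have h3 : ‖v‖ ≤ 2 * r * √(f y - m) := by
    refine le_of_mul_le_mul_left ?_ hv
    linarith
  have h4 : ‖v‖ ^ 2 ≤ (2 * r * √(f y - m)) ^ 2 := pow_le_pow_left₀ hv.le h3 2
  rw [mul_pow, hs2] at h4
  nlinarith

/-- an `L`-smooth function satisfying the `μ`-PL condition satisfies the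
error-bound condition `‖∇f x‖ ≥ μ · dist(x, argmin f)`. -/
theorem stmt_1 {d : ℕ}
    (f : EuclideanSpace ℝ (Fin d) → ℝ)
    (g : EuclideanSpace ℝ (Fin d) → EuclideanSpace ℝ (Fin d))
    (L μ : ℝ) (hL : 0 < L) (hμ : 0 < μ)
    (hg : ∀ x, HasGradientAt f (g x) x)
    (hLip : ∀ x₁ x₂, ‖g x₁ - g x₂‖ ≤ L * ‖x₁ - x₂‖)
    (S : Set (EuclideanSpace ℝ (Fin d)))
    (hS : S = {z | ∀ x, f z ≤ f x}) (hSne : S.Nonempty)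
    (hPL : ∀ x, ∀ z ∈ S, 2 * μ * (f x - f z) ≤ ‖g x‖ ^ 2) :
    ∀ x, μ * Metric.infDist x S ≤ ‖g x‖ := by
  intro x
  obtain ⟨z, hz⟩ := hSne
  have hmin : ∀ y, f z ≤ f y := by
    rw [hS] at hz
    exact hz
  have hcont : Continuous f :=
    continuous_iff_continuousAt.2 fun y => (hg y).hasFDerivAt.continuousAt
  have growth_lt : ∀ r, 0 < r → r ^ 2 < μ / 2 → r * Metric.infDist x S ≤ √(f x - f z) := by
    intro r hr hrμ
    have hF : Continuous fun y => √(f y - f z) + r * dist y x := by fun_prop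
    have hcoer : Filter.Tendsto (fun y => √(f y - f z) + r * dist y x)
        (Filter.cocompact _) Filter.atTop :=
      Filter.tendsto_atTop_mono (fun y => le_add_of_nonneg_left (Real.sqrt_nonneg _))
        ((tendsto_dist_right_cocompact_atTop x).const_mul_atTop hr)
    obtain ⟨y, hy⟩ := hF.exists_forall_le hcoer
    have hyz : f y ≤ f z := by
      refine mem_argmin_of_slope_le hμ hrμ (hg y) (hPL y z hz) fun w => ?_
      have h1 := hy w
      have h2 := mul_le_mul_of_nonneg_left (dist_triangle w y x) hr.le
      rw [← dist_eq_norm]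
      linarith
    have hyS : y ∈ S := by
      rw [hS]
      exact fun w => hyz.trans (hmin w)
    have h1 := hy x
    rw [dist_self, mul_zero, add_zero, dist_comm] at h1
    have h2 := mul_le_mul_of_nonneg_left (Metric.infDist_le_dist_of_mem (x := x) hyS) hr.le
    have h3 := Real.sqrt_nonneg (f y - f z)
    linarith
  have hD : 0 ≤ Metric.infDist x S := Metric.infDist_nonneg
  have growth : √(μ / 2) * Metric.infDist x S ≤ √(f x - f z) := by
    by_contra! hlt
    have hDpos : 0 < Metric.infDist x S :=
      hD.lt_of_ne fun h => by
        rw [← h, mul_zero] at hlt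
        exact (Real.sqrt_nonneg _).not_gt hlt
    obtain ⟨r, hr1, hr2⟩ := exists_between ((div_lt_iff₀ hDpos).2 hlt)
    have hr : 0 < r := lt_of_le_of_lt (by positivity) hr1
    have h1 := growth_lt r hr ((Real.lt_sqrt hr.le).1 hr2)
    exact h1.not_gt ((div_lt_iff₀ hDpos).1 hr1)
  have hsq := pow_le_pow_left₀ (by positivity) growth 2
  rw [mul_pow, Real.sq_sqrt (by positivity), Real.sq_sqrt (sub_nonneg.2 (hmin x))] at hsq
  refine (sq_le_sq₀ (by positivity) (norm_nonneg _)).1 ?_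
  have := hPL x z hz
  nlinarith
end

section
/- Let f : ℝ^d → ℝ be differentiable with L-Lipschitz gradient, suppose f attains its infimum on a nonempty set S = argmin f, and suppose f satisfies the μ-PL condition: ∥∇f(x)∥² ≥ 2μ(f(x) − min f) for all x. Then f satisfies the quadratic-growth condition: f(x) − min f ≥ (μ/2) · dist(x, S)² for all x ∈ ℝ^d, where dist(x, S) = inf_{x* ∈ S} ∥x − x*∥. -/
open scoped BigOperators

/-!
Write `φ = √(f - min f)`. Where `φ > 0`, the PL condition says `‖∇φ‖ ≥ √(μ/2)`. Fix `x` and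
`0 < c < √(μ/2)`, and minimise the coercive function `y ↦ φ y + c ‖y - x‖`. By the triangle
inequality, `φ` decreases from a minimiser `y₀` at rate at most `c` in every direction, so
`‖∇φ y₀‖ ≤ c` if `φ y₀ > 0`, contradicting PL. Hence `y₀` lies in `argmin f`, and comparing the
values at `y₀` and `x` gives `c · dist(x, argmin f) ≤ c ‖y₀ - x‖ ≤ φ x`. Now let `c → √(μ/2)`.
This replaces the usual gradient-flow argument by a variational principle in the style of
Ekeland.
-/

/-- If `F` is differentiable and positive at `y` and `√F` decreases from `y` at rate at most `c`,
then `‖∇F y‖ ≤ 2 c √(F y)`, i.e. `‖∇√F‖ ≤ c` at `y`. -/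
lemma norm_grad_le_of_sqrt_slope {E : Type*} [NormedAddCommGroup E] [InnerProductSpace ℝ E]
    [CompleteSpace E] {F : E → ℝ} {v y : E} {c : ℝ} (hF : HasGradientAt F v y) (hpos : 0 < F y)
    (hc : 0 ≤ c) (hmin : ∀ z, √(F y) ≤ √(F z) + c * ‖z - y‖) :
    ‖v‖ ≤ 2 * c * √(F y) := by
  have hs : 0 < √(F y) := Real.sqrt_pos.2 hpos
  -- Follow `√F` along the ray of steepest descent.
  have hline : HasDerivAt (fun t : ℝ => y + t • (-v)) (-v) 0 := by
    simpa using ((hasDerivAt_id (0 : ℝ)).smul_const (-v)).const_add y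
  have hcomp : HasDerivAt (fun t : ℝ => F (y + t • (-v))) (-‖v‖ ^ 2) 0 := by
    have h1 : HasFDerivAt F (InnerProductSpace.toDual ℝ E v) (y + (0 : ℝ) • (-v)) := by
      simpa using hF.hasFDerivAt
    exact (h1.comp_hasDerivAt 0 hline).congr_deriv (by simp)
  have hk : HasDerivAt (fun t : ℝ => √(F (y + t • (-v))) + t * (c * ‖v‖))
      (-‖v‖ ^ 2 / (2 * √(F y)) + c * ‖v‖) 0 := by
    have h1 := hcomp.sqrt (by simpa using hpos.ne')
    have h2 := h1.add ((hasDerivAt_id (0 : ℝ)).mul_const (c * ‖v‖))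
    exact h2.congr_deriv (by simp)
  have hnonneg : 0 ≤ -‖v‖ ^ 2 / (2 * √(F y)) + c * ‖v‖ := by
    have hw := (hasDerivWithinAt_iff_tendsto_slope' (s := Set.Ioi (0 : ℝ)) (by simp)).1
      hk.hasDerivWithinAt
    refine ge_of_tendsto hw ?_
    filter_upwards [self_mem_nhdsWithin] with t ht
    have ht : 0 < t := ht
    have h := hmin (y + t • (-v))
    rw [add_sub_cancel_left, norm_smul, norm_neg, Real.norm_of_nonneg ht.le] at h
    rw [slope_def_field]
    refine div_nonneg ?_ (by linarith)
    simp only [zero_smul, add_zero, zero_mul]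
    linarith
  rcases (norm_nonneg v).eq_or_lt with h0 | h0
  · rw [← h0]; positivity
  · have h1 : ‖v‖ ^ 2 / (2 * √(F y)) ≤ c * ‖v‖ := by
      rw [neg_div] at hnonneg; linarith
    rw [div_le_iff₀ (by positivity)] at h1
    nlinarith

/-- an `L`-smooth function satisfying the `μ`-PL condition satisfies the
quadratic-growth condition `f x - min f ≥ (μ/2) · dist(x, argmin f)²`. -/
theorem stmt_2 {d : ℕ}
    (f : EuclideanSpace ℝ (Fin d) → ℝ)
    (g : EuclideanSpace ℝ (Fin d) → EuclideanSpace ℝ (Fin d))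
    (L μ : ℝ) (hL : 0 < L) (hμ : 0 < μ)
    (hg : ∀ x, HasGradientAt f (g x) x)
    (hLip : ∀ x₁ x₂, ‖g x₁ - g x₂‖ ≤ L * ‖x₁ - x₂‖)
    (S : Set (EuclideanSpace ℝ (Fin d)))
    (hS : S = {z | ∀ x, f z ≤ f x}) (hSne : S.Nonempty)
    (hPL : ∀ x, ∀ z ∈ S, 2 * μ * (f x - f z) ≤ ‖g x‖ ^ 2) :
    ∀ x, ∀ z ∈ S, μ / 2 * Metric.infDist x S ^ 2 ≤ f x - f z := by
  intro x z hz
  have hzmin : ∀ y, f z ≤ f y := by rw [hS] at hz; exact hz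
  have key : ∀ c : ℝ, 0 < c → c ^ 2 < μ / 2 → c ^ 2 * Metric.infDist x S ^ 2 ≤ f x - f z := by
    intro c hc hcμ
    have hcont : Continuous f :=
      continuous_iff_continuousAt.2 fun y => (hg y).hasFDerivAt.continuousAt
    have hcoer : Filter.Tendsto (fun y => √(f y - f z) + c * dist y x)
        (Filter.cocompact _) Filter.atTop :=
      Filter.tendsto_atTop_mono (fun y => le_add_of_nonneg_left (Real.sqrt_nonneg _))
        ((tendsto_dist_right_cocompact_atTop x).const_mul_atTop hc)
    obtain ⟨y, hy⟩ := Continuous.exists_forall_le (by fun_prop) hcoer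
    have hyz : f y ≤ f z := by
      by_contra! hlt
      have hpos : 0 < f y - f z := sub_pos.2 hlt
      have hgrad : HasGradientAt (fun w => f w - f z) (g y) y :=
        hasGradientAt_iff_hasFDerivAt.2 ((hg y).hasFDerivAt.sub_const (f z))
      have hle := norm_grad_le_of_sqrt_slope hgrad hpos hc.le (fun w => by
        have h1 := hy w
        have h2 := mul_le_mul_of_nonneg_left (dist_triangle w y x) hc.le
        rw [← dist_eq_norm]
        linarith)
      have hsq := pow_le_pow_left₀ (norm_nonneg _) hle 2
      rw [mul_pow, Real.sq_sqrt hpos.le] at hsq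
      have := hPL y z hz
      nlinarith
    have hyS : y ∈ S := by rw [hS]; exact fun w => hyz.trans (hzmin w)
    have hdist : c * Metric.infDist x S ≤ √(f x - f z) := by
      have h1 := hy x
      have h2 := mul_le_mul_of_nonneg_left (Metric.infDist_le_dist_of_mem (x := x) hyS) hc.le
      rw [dist_self, mul_zero, add_zero, dist_comm] at h1
      linarith [Real.sqrt_nonneg (f y - f z)]
    have hsq := pow_le_pow_left₀ (mul_nonneg hc.le Metric.infDist_nonneg) hdist 2
    rwa [mul_pow, Real.sq_sqrt (sub_nonneg.2 (hzmin x))] at hsq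
  by_contra! hlt
  have hF : 0 ≤ f x - f z := sub_nonneg.2 (hzmin x)
  have hD : 0 < Metric.infDist x S ^ 2 :=
    pos_of_mul_pos_right (hF.trans_lt hlt) (by positivity)
  obtain ⟨t, ht1, ht2⟩ := exists_between ((div_lt_iff₀ hD).2 hlt)
  have ht0 : 0 < t := (div_nonneg hF hD.le).trans_lt ht1
  have h := key (√t) (Real.sqrt_pos.2 ht0) (by rwa [Real.sq_sqrt ht0.le])
  rw [Real.sq_sqrt ht0.le] at h
  exact absurd h (not_le.2 ((div_lt_iff₀ hD).1 ht1))
end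

section
/- Let W ∈ ℝ^{m×m} be symmetric with W𝟙 = 𝟙 and ν = ∥W − (1/m)𝟙𝟙ᵀ∥ satisfying 0 < ν < 1. Let x^1, …, x^m, w^1, …, w^m ∈ ℝ^d, let 0 < η < 1 and γ > 0, and define x̃^i = ∑_{j=1}^m W_{ij} x^j − γ w^i and x^i_+ = x^i + η(x̃^i − x^i) for each i. Write x̄ = (1/m)∑_i x^i, x̄_+ = (1/m)∑_i x^i_+, w̄ = (1/m)∑_i w^i. Then ∑_{i=1}^m ∥x^i_+ − x̄_+∥² ≤ (1 − (1−ν²)η/2) ∑_{i=1}^m ∥x^i − x̄∥² + (2ηγ²/(1−ν²)) ∑_{i=1}^m ∥w^i − w̄∥². -/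
open scoped BigOperators

/-!
Write `aᵢ = xᵢ - x̄`, `bᵢ = wᵢ - w̄` and `M = W - (1/m) 𝟙𝟙ᵀ`. Since `W` is symmetric with row sums
one, it preserves averages, and since `∑ aᵢ = 0` the rank-one part of `M` kills `a`; hence
`xpᵢ - x̄p = (1 - η) aᵢ + η ((M a)ᵢ - γ bᵢ)`. Convexity of the squared norm, followed by Young's
inequality with parameter `s = (1 - ν²) / (2ν²)`, bounds its square by
`(1 - η) ‖aᵢ‖² + η ((1 + ν²) / (2ν²) ‖(M a)ᵢ‖² + 2γ² / (1 - ν²) ‖bᵢ‖²)`.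
Summing over `i` and using `∑ ‖(M a)ᵢ‖² ≤ ν² ∑ ‖aᵢ‖²`, which is the definition of the spectral
norm applied coordinate by coordinate (`sum_norm_sq_mix_le`), gives the claim.
-/

/-- The spectral norm of `M` also bounds the action of `M ⊗ I` on families of vectors. -/
lemma sum_norm_sq_mix_le {m d : ℕ} (M : Matrix (Fin m) (Fin m) ℝ)
    (a : Fin m → EuclideanSpace ℝ (Fin d)) :
    ∑ i, ‖∑ j, M i j • a j‖ ^ 2 ≤
      ‖Matrix.toEuclideanCLM (𝕜 := ℝ) M‖ ^ 2 * ∑ i, ‖a i‖ ^ 2 := by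
  have key : ∀ c : Fin d, ∑ i, (∑ j, M i j * a j c) ^ 2 ≤
      ‖Matrix.toEuclideanCLM (𝕜 := ℝ) M‖ ^ 2 * ∑ i, (a i c) ^ 2 := by
    intro c
    have h := (Matrix.toEuclideanCLM (𝕜 := ℝ) M).le_opNorm (WithLp.toLp 2 fun j => a j c)
    have h2 := pow_le_pow_left₀ (norm_nonneg _) h 2
    rw [mul_pow, EuclideanSpace.real_norm_sq_eq, EuclideanSpace.real_norm_sq_eq] at h2
    simpa [Matrix.toEuclideanCLM_toLp, Matrix.mulVec, dotProduct] using h2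
  simp only [EuclideanSpace.real_norm_sq_eq]
  rw [Finset.sum_comm, Finset.sum_comm (f := fun i c => (a i c) ^ 2), Finset.mul_sum]
  refine Finset.sum_le_sum fun c _ => ?_
  simpa using key c

/-- Convexity of the square and Young's inequality with parameter `(1 - ν²) / (2ν²)`. -/
lemma norm_sq_step_le {E : Type*} [NormedAddCommGroup E] [NormedSpace ℝ E] (a u b : E)
    {ν η γ : ℝ} (hν0 : 0 < ν) (hν1 : ν < 1) (hη0 : 0 < η) (hη1 : η < 1) (hγ : 0 < γ) :
    ‖(1 - η) • a + η • (u - γ • b)‖ ^ 2 ≤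
      (1 - η) * ‖a‖ ^ 2 + η * ((1 + ν ^ 2) / (2 * ν ^ 2) * ‖u‖ ^ 2
        + 2 * γ ^ 2 / (1 - ν ^ 2) * ‖b‖ ^ 2) := by
  have hδ : 0 < 1 - ν ^ 2 := by nlinarith
  have h1 : ‖(1 - η) • a + η • (u - γ • b)‖ ≤ (1 - η) * ‖a‖ + η * ‖u - γ • b‖ := by
    refine (norm_add_le _ _).trans_eq ?_
    rw [norm_smul, norm_smul, Real.norm_of_nonneg hη0.le, Real.norm_of_nonneg (by linarith)]
  have h2 : ‖u - γ • b‖ ≤ ‖u‖ + γ * ‖b‖ := by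
    refine (norm_sub_le _ _).trans_eq ?_
    rw [norm_smul, Real.norm_of_nonneg hγ.le]
  have h3 : (‖u‖ + γ * ‖b‖) ^ 2 ≤ (1 + ν ^ 2) / (2 * ν ^ 2) * ‖u‖ ^ 2
        + 2 * γ ^ 2 / (1 - ν ^ 2) * ‖b‖ ^ 2 := by
    have e : (1 + ν ^ 2) / (2 * ν ^ 2) * ‖u‖ ^ 2
        + 2 * γ ^ 2 / (1 - ν ^ 2) * ‖b‖ ^ 2 - (‖u‖ + γ * ‖b‖) ^ 2 =
        ((1 - ν ^ 2) * ‖u‖ - 2 * ν ^ 2 * (γ * ‖b‖)) ^ 2 / (2 * ν ^ 2 * (1 - ν ^ 2))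
          + (γ * ‖b‖) ^ 2 := by
      field_simp
      ring
    have : 0 ≤ ((1 - ν ^ 2) * ‖u‖ - 2 * ν ^ 2 * (γ * ‖b‖)) ^ 2 / (2 * ν ^ 2 * (1 - ν ^ 2))
          + (γ * ‖b‖) ^ 2 := by positivity
    linarith
  have h4 := (pow_le_pow_left₀ (norm_nonneg _) h2 2).trans h3
  have h5 := pow_le_pow_left₀ (norm_nonneg _) h1 2
  have h6 := mul_le_mul_of_nonneg_left h4 hη0.le
  have h7 : 0 ≤ η * (1 - η) * (‖a‖ - ‖u - γ • b‖) ^ 2 :=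
    mul_nonneg (mul_nonneg hη0.le (by linarith)) (sq_nonneg _)
  nlinarith

/-- one momentum consensus step contracts the consensus error. -/
theorem stmt_7 {m d : ℕ}
    (W : Matrix (Fin m) (Fin m) ℝ) (hWsymm : W.IsSymm)
    (hWrow : ∀ i, ∑ j, W i j = 1)
    (ν : ℝ)
    (hν : ν = ‖Matrix.toEuclideanCLM (𝕜 := ℝ)
        ((W - (m : ℝ)⁻¹ • Matrix.of fun _ _ => (1 : ℝ) : Matrix (Fin m) (Fin m) ℝ))‖)
    (hν0 : 0 < ν) (hν1 : ν < 1)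
    (x w : Fin m → EuclideanSpace ℝ (Fin d))
    (η γ : ℝ) (hη0 : 0 < η) (hη1 : η < 1) (hγ : 0 < γ)
    (xt xp : Fin m → EuclideanSpace ℝ (Fin d))
    (hxt : ∀ i, xt i = (∑ j, W i j • x j) - γ • w i)
    (hxp : ∀ i, xp i = x i + η • (xt i - x i)) :
    ∑ i, ‖xp i - (m : ℝ)⁻¹ • ∑ k, xp k‖ ^ 2 ≤
      (1 - (1 - ν ^ 2) * η / 2) * ∑ i, ‖x i - (m : ℝ)⁻¹ • ∑ k, x k‖ ^ 2 +
        2 * η * γ ^ 2 / (1 - ν ^ 2) * ∑ i, ‖w i - (m : ℝ)⁻¹ • ∑ k, w k‖ ^ 2 := by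
  have hsum : ∑ i, ∑ j, W i j • x j = ∑ j, x j := by
    rw [Finset.sum_comm]
    refine Finset.sum_congr rfl fun j _ => ?_
    rw [← Finset.sum_smul, Finset.sum_congr rfl fun i _ => (hWsymm.apply i j).symm, hWrow,
      one_smul]
  have hXp : ∑ k, xp k = ∑ k, x k - (η * γ) • ∑ k, w k := by
    simp only [hxp, hxt, Finset.sum_add_distrib, ← Finset.smul_sum, Finset.sum_sub_distrib, hsum]
    module
  -- For `m = 0` this holds because the sum is empty.
  have hcent : ∑ j, (x j - (m : ℝ)⁻¹ • ∑ k, x k) = 0 := by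
    rcases Nat.eq_zero_or_pos m with rfl | hm
    · simp
    · have : (m : ℝ) ≠ 0 := by positivity
      rw [Finset.sum_sub_distrib, Finset.sum_const, Finset.card_univ, Fintype.card_fin,
        ← Nat.cast_smul_eq_nsmul ℝ, smul_smul, mul_inv_cancel₀ this, one_smul, sub_self]
  set M : Matrix (Fin m) (Fin m) ℝ := W - (m : ℝ)⁻¹ • Matrix.of fun _ _ => (1 : ℝ) with hM
  have hMa : ∀ i, ∑ j, M i j • (x j - (m : ℝ)⁻¹ • ∑ k, x k) =
      ∑ j, W i j • x j - (m : ℝ)⁻¹ • ∑ k, x k := by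
    intro i
    have : ∀ j, M i j = W i j - (m : ℝ)⁻¹ := fun j => by simp [hM]
    simp only [this, sub_smul _ (m : ℝ)⁻¹, Finset.sum_sub_distrib (f := fun j => W i j • _)]
    rw [← Finset.smul_sum, hcent, smul_zero, sub_zero]
    simp only [smul_sub, Finset.sum_sub_distrib]
    rw [← Finset.sum_smul, hWrow, one_smul]
  have hdev : ∀ i, xp i - (m : ℝ)⁻¹ • ∑ k, xp k =
      (1 - η) • (x i - (m : ℝ)⁻¹ • ∑ k, x k) +
        η • (∑ j, M i j • (x j - (m : ℝ)⁻¹ • ∑ k, x k) -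
          γ • (w i - (m : ℝ)⁻¹ • ∑ k, w k)) := by
    intro i
    rw [hMa, hXp, hxp, hxt]
    module
  have hspec := sum_norm_sq_mix_le M (fun j => x j - (m : ℝ)⁻¹ • ∑ k, x k)
  rw [← hν] at hspec
  have hδ : 0 < 1 - ν ^ 2 := by nlinarith
  have hstep := Finset.sum_le_sum fun i (_ : i ∈ Finset.univ) =>
    norm_sq_step_le (x i - (m : ℝ)⁻¹ • ∑ k, x k)
      (∑ j, M i j • (x j - (m : ℝ)⁻¹ • ∑ k, x k)) (w i - (m : ℝ)⁻¹ • ∑ k, w k)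
      hν0 hν1 hη0 hη1 hγ
  simp only [← hdev, Finset.sum_add_distrib, ← Finset.mul_sum] at hstep
  refine hstep.trans ?_
  have hc : 0 ≤ (1 + ν ^ 2) / (2 * ν ^ 2) := by positivity
  have h1 := mul_le_mul_of_nonneg_left (mul_le_mul_of_nonneg_left hspec hc) hη0.le
  have hν2 : ∀ t : ℝ, (1 + ν ^ 2) / (2 * ν ^ 2) * (ν ^ 2 * t) = (1 + ν ^ 2) / 2 * t := by
    intro t
    field_simp
  rw [hν2] at h1
  rw [mul_add]
  refine (add_le_add_right (add_le_add_left h1 _) _).trans_eq ?_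
  ring
end

section
/- Let W ∈ ℝ^{m×m} be symmetric with W𝟙 = 𝟙 and ν = ∥W − (1/m)𝟙𝟙ᵀ∥ satisfying 0 < ν < 1. Let x^1, …, x^m, w^1, …, w^m ∈ ℝ^d, let γ > 0, and define x̃^i = ∑_{j=1}^m W_{ij} x^j − γ w^i for each i. Write x̄ = (1/m)∑_i x^i. Then ∑_{i=1}^m ∥x̃^i − x^i∥² ≤ (3 + ν²) ∑_{i=1}^m ∥x^i − x̄∥² + (2(1+ν²)/(1−ν²)) γ² ∑_{i=1}^m ∥w^i∥². -/
open scoped BigOperators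

/-!
Write `A = W - (1/m) 𝟙𝟙ᵀ` and `X i = x i - x̄`. Since `W 𝟙 = 𝟙` and `∑ X i = 0`, the displacement is
`A X - X - γ w`, so in each coordinate of `ℝ^d` its norm over the index `i` is at most
`(1 + ν) a + b` with `a = ‖X‖` and `b = γ ‖w‖`. The quadratic form
`(3 + ν²) a² + 2 (1 + ν²) / (1 - ν²) b² - ((1 + ν) a + b)²` is positive semidefinite, as completing
the square leaves the remainder `(1 - ν)³ b² / (1 + ν)`, up to a positive factor. Summing over the
coordinates gives the theorem.
-/

lemma sq_bound_of_contraction (ν a b : ℝ) (h0 : 0 < ν) (h1 : ν < 1) :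
    ((1 + ν) * a + b) ^ 2 ≤ (3 + ν ^ 2) * a ^ 2 + 2 * (1 + ν ^ 2) / (1 - ν ^ 2) * b ^ 2 := by
  have hm : 0 < 1 - ν := by linarith
  have hp : 0 < 1 + ν := by linarith
  have key : (3 + ν ^ 2) * a ^ 2 + 2 * (1 + ν ^ 2) / (1 - ν ^ 2) * b ^ 2 - ((1 + ν) * a + b) ^ 2
      = ((2 * (1 - ν) * a - (1 + ν) * b) ^ 2 + (1 - ν) ^ 3 / (1 + ν) * b ^ 2)
        / (2 * (1 - ν)) := by
    have : 1 - ν ^ 2 = (1 - ν) * (1 + ν) := by ring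
    rw [this]
    field_simp
    ring
  have : 0 ≤ ((2 * (1 - ν) * a - (1 + ν) * b) ^ 2 + (1 - ν) ^ 3 / (1 + ν) * b ^ 2)
        / (2 * (1 - ν)) := by positivity
  linarith

/-- The one-dimensional case `d = 1` of the displacement bound, with the displacement `u`
described by its coordinates. -/
lemma coord_displacement_bound {m : ℕ} (W : Matrix (Fin m) (Fin m) ℝ)
    (hWrow : ∀ i, ∑ j, W i j = 1) (ν : ℝ)
    (hν : ν = ‖Matrix.toEuclideanCLM (𝕜 := ℝ)
        ((W - (m : ℝ)⁻¹ • Matrix.of fun _ _ => (1 : ℝ) : Matrix (Fin m) (Fin m) ℝ))‖)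
    (hν0 : 0 < ν) (hν1 : ν < 1) (x w u : Fin m → ℝ) (γ : ℝ) (hγ : 0 < γ)
    (hu : ∀ i, u i = (∑ j, W i j * x j) - γ * w i - x i) :
    ∑ i, u i ^ 2 ≤ (3 + ν ^ 2) * ∑ i, (x i - (m : ℝ)⁻¹ * ∑ k, x k) ^ 2 +
        2 * (1 + ν ^ 2) / (1 - ν ^ 2) * γ ^ 2 * ∑ i, w i ^ 2 := by
  set A : Matrix (Fin m) (Fin m) ℝ :=
    W - (m : ℝ)⁻¹ • Matrix.of fun _ _ => (1 : ℝ) with hA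
  set c : ℝ := (m : ℝ)⁻¹ * ∑ k, x k with hc
  set X : EuclideanSpace ℝ (Fin m) := WithLp.toLp 2 (fun i => x i - c) with hX
  set z : EuclideanSpace ℝ (Fin m) := WithLp.toLp 2 w with hz
  set U : EuclideanSpace ℝ (Fin m) := WithLp.toLp 2 u with hU
  have hdec : U = Matrix.toEuclideanCLM (𝕜 := ℝ) A X - X - γ • z := by
    ext i
    have hm : (m : ℝ) ≠ 0 := by
      have := i.pos
      positivity
    have hmc : (m : ℝ) * c = ∑ k, x k := by rw [hc]; field_simp
    have hAX : (Matrix.toEuclideanCLM (𝕜 := ℝ) A X) i = (∑ j, W i j * x j) - c := by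
      have h1 : (Matrix.toEuclideanCLM (𝕜 := ℝ) A X) i = ∑ j, A i j * (x j - c) := rfl
      have h2 : ∀ j, A i j * (x j - c)
          = W i j * x j - W i j * c - (m : ℝ)⁻¹ * (x j - c) := by
        intro j
        simp [hA]
        ring
      rw [h1]
      simp only [h2, Finset.sum_sub_distrib, ← Finset.mul_sum, ← Finset.sum_mul, hWrow]
      simp [hmc]
    simp only [PiLp.sub_apply, PiLp.smul_apply, hAX]
    simp only [hU, hX, hz, hu, smul_eq_mul]
    ring
  have hnorm : ‖U‖ ≤ (1 + ν) * ‖X‖ + γ * ‖z‖ := by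
    have h1 := (Matrix.toEuclideanCLM (𝕜 := ℝ) A).le_opNorm X
    rw [← hν] at h1
    have h2 : ‖U‖ ≤ ‖Matrix.toEuclideanCLM (𝕜 := ℝ) A X‖ + ‖X‖ + ‖γ • z‖ := by
      rw [hdec]
      exact (norm_sub_le _ _).trans (by gcongr; exact norm_sub_le _ _)
    rw [norm_smul, Real.norm_of_nonneg hγ.le] at h2
    linarith
  have hsq := (pow_le_pow_left₀ (norm_nonneg U) hnorm 2).trans
    (sq_bound_of_contraction ν ‖X‖ (γ * ‖z‖) hν0 hν1)
  rw [mul_pow, EuclideanSpace.real_norm_sq_eq, EuclideanSpace.real_norm_sq_eq,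
    EuclideanSpace.real_norm_sq_eq, ← mul_assoc] at hsq
  exact hsq

/-- bound on the displacement of one consensus gradient step. -/
theorem stmt_8 {m d : ℕ}
    (W : Matrix (Fin m) (Fin m) ℝ) (hWsymm : W.IsSymm)
    (hWrow : ∀ i, ∑ j, W i j = 1)
    (ν : ℝ)
    (hν : ν = ‖Matrix.toEuclideanCLM (𝕜 := ℝ)
        ((W - (m : ℝ)⁻¹ • Matrix.of fun _ _ => (1 : ℝ) : Matrix (Fin m) (Fin m) ℝ))‖)
    (hν0 : 0 < ν) (hν1 : ν < 1)
    (x w : Fin m → EuclideanSpace ℝ (Fin d))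
    (γ : ℝ) (hγ : 0 < γ)
    (xt : Fin m → EuclideanSpace ℝ (Fin d))
    (hxt : ∀ i, xt i = (∑ j, W i j • x j) - γ • w i) :
    ∑ i, ‖xt i - x i‖ ^ 2 ≤
      (3 + ν ^ 2) * ∑ i, ‖x i - (m : ℝ)⁻¹ • ∑ k, x k‖ ^ 2 +
        2 * (1 + ν ^ 2) / (1 - ν ^ 2) * γ ^ 2 * ∑ i, ‖w i‖ ^ 2 := by
  simp only [EuclideanSpace.real_norm_sq_eq]
  rw [Finset.sum_comm, Finset.sum_comm (f := fun i l => (x i - (m : ℝ)⁻¹ • ∑ k, x k) l ^ 2),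
    Finset.sum_comm (f := fun i l => w i l ^ 2), Finset.mul_sum, Finset.mul_sum,
    ← Finset.sum_add_distrib]
  refine Finset.sum_le_sum fun l _ => ?_
  have h := coord_displacement_bound W hWrow ν hν hν0 hν1 (fun i => x i l) (fun i => w i l)
    (fun i => (xt i - x i) l) γ hγ (fun i => by simp [hxt])
  simpa using h
end

section
/- Let W ∈ ℝ^{m×m} be symmetric doubly stochastic with ν = ∥W − (1/m)𝟙𝟙ᵀ∥ satisfying 0 < ν < 1. Let w^1, …, w^m, u^1, …, u^m, u'^1, …, u'^m ∈ ℝ^d and define the gradient-tracking update w'^i = ∑_{j=1}^m W_{ij}(w^j + u'^j − u^j) for each i. Write w̄ = (1/m)∑_i w^i and w̄' = (1/m)∑_i w'^i. Then ∑_{i=1}^m ∥w'^i − w̄'∥² ≤ ν ∑_{i=1}^m ∥w^i − w̄∥² + (ν²/(1−ν)) ∑_{i=1}^m ∥u'^i − u^i∥². -/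
/-!
Write `A = W - 𝟙𝟙ᵀ/m`, `e j = w j - w̄` and `δ j = u' j - u j`. Since `W` has row and column sums one,
the update preserves averages up to `δ̄` and `A` annihilates constant vectors, so
`w' i - w̄' = ∑ j, A i j • (e j + δ j)`. Applying `‖A x‖ ≤ ν ‖x‖` to each of the `d` coordinates
(`sum_norm_sq_matrix_smul_le`) bounds the left side by `ν² ∑ ‖e j + δ j‖²`, and the weighted Young
inequality `‖a + b‖² ≤ ‖a‖²/ν + ‖b‖²/(1-ν)` (`norm_add_sq_le_weighted`) gives the two stated terms.
-/

/-- The operator norm bound for a matrix acting on families of vectors (the norm of `A ⊗ I_d` is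
at most that of `A`): the squared norm splits over the `d` coordinates. -/
theorem sum_norm_sq_matrix_smul_le {m d : ℕ} (A : Matrix (Fin m) (Fin m) ℝ)
    (x : Fin m → EuclideanSpace ℝ (Fin d)) :
    ∑ i, ‖∑ j, A i j • x j‖ ^ 2 ≤
      ‖Matrix.toEuclideanCLM (𝕜 := ℝ) A‖ ^ 2 * ∑ i, ‖x i‖ ^ 2 := by
  simp only [EuclideanSpace.real_norm_sq_eq]
  rw [Finset.sum_comm, Finset.sum_comm (f := fun i k => (x i).ofLp k ^ 2), Finset.mul_sum]
  refine Finset.sum_le_sum fun k _ => ?_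
  have h := (Matrix.toEuclideanCLM (𝕜 := ℝ) A).le_opNorm (WithLp.toLp 2 fun j => x j k)
  have h2 := pow_le_pow_left₀ (norm_nonneg _) h 2
  rw [mul_pow, EuclideanSpace.real_norm_sq_eq, EuclideanSpace.real_norm_sq_eq] at h2
  simpa [Matrix.mulVec, dotProduct] using h2

theorem norm_add_sq_le_weighted {E : Type*} [NormedAddCommGroup E] {ν : ℝ}
    (hν0 : 0 < ν) (hν1 : ν < 1) (a b : E) :
    ‖a + b‖ ^ 2 ≤ ‖a‖ ^ 2 / ν + ‖b‖ ^ 2 / (1 - ν) := by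
  have h1 : 0 < 1 - ν := by linarith
  have h2 := pow_le_pow_left₀ (norm_nonneg _) (norm_add_le a b) 2
  refine h2.trans ?_
  rw [div_add_div _ _ hν0.ne' h1.ne', le_div_iff₀ (mul_pos hν0 h1)]
  -- The difference of the two sides is a perfect square.
  nlinarith [sq_nonneg ((1 - ν) * ‖a‖ - ν * ‖b‖)]


open scoped BigOperators

/-- contraction of the consensus error of the gradient-tracking update. -/
theorem stmt_9 {m d : ℕ}
    (W : Matrix (Fin m) (Fin m) ℝ) (hWsymm : W.IsSymm)
    (hWnn : ∀ i j, 0 ≤ W i j)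
    (hWrow : ∀ i, ∑ j, W i j = 1) (hWcol : ∀ j, ∑ i, W i j = 1)
    (ν : ℝ)
    (hν : ν = ‖Matrix.toEuclideanCLM (𝕜 := ℝ)
        ((W - (m : ℝ)⁻¹ • Matrix.of fun _ _ => (1 : ℝ) : Matrix (Fin m) (Fin m) ℝ))‖)
    (hν0 : 0 < ν) (hν1 : ν < 1)
    (w u u' : Fin m → EuclideanSpace ℝ (Fin d))
    (w' : Fin m → EuclideanSpace ℝ (Fin d))
    (hw' : ∀ i, w' i = ∑ j, W i j • (w j + u' j - u j)) :
    ∑ i, ‖w' i - (m : ℝ)⁻¹ • ∑ k, w' k‖ ^ 2 ≤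
      ν * ∑ i, ‖w i - (m : ℝ)⁻¹ • ∑ k, w k‖ ^ 2 +
        ν ^ 2 / (1 - ν) * ∑ i, ‖u' i - u i‖ ^ 2 := by
  have key : ∀ i, w' i - (m : ℝ)⁻¹ • ∑ k, w' k =
      ∑ j, (W - (m : ℝ)⁻¹ • Matrix.of fun _ _ => (1 : ℝ) : Matrix (Fin m) (Fin m) ℝ) i j •
        ((w j - (m : ℝ)⁻¹ • ∑ k, w k) + (u' j - u j)) := by
    intro i
    have hm : (m : ℝ) ≠ 0 := Nat.cast_ne_zero.mpr i.pos.ne'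
    have hsum : ∑ k, w' k = ∑ j, (w j + u' j - u j) := by
      simp only [hw']
      rw [Finset.sum_comm]
      refine Finset.sum_congr rfl fun j _ => ?_
      rw [← Finset.sum_smul, hWcol, one_smul]
    have hrow : ∑ j, (W i j - (m : ℝ)⁻¹) = 0 := by
      simp [Finset.sum_sub_distrib, hWrow, hm]
    have hx : ∀ j, (w j - (m : ℝ)⁻¹ • ∑ k, w k) + (u' j - u j) =
        (w j + u' j - u j) - (m : ℝ)⁻¹ • ∑ k, w k := fun j => by abel
    simp only [Matrix.sub_apply, Matrix.smul_apply, Matrix.of_apply, smul_eq_mul, mul_one, hx]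
    rw [hsum, hw' i]
    generalize (m : ℝ)⁻¹ • ∑ k, w k = c
    generalize hy : (fun j => w j + u' j - u j) = y
    have hy' : ∀ j, w j + u' j - u j = y j := fun j => congrFun hy j
    simp only [hy', smul_sub]
    rw [Finset.sum_sub_distrib, ← Finset.sum_smul, hrow, zero_smul, sub_zero]
    simp only [sub_smul]
    rw [Finset.sum_sub_distrib, Finset.smul_sum]
  have hA := sum_norm_sq_matrix_smul_le
    (W - (m : ℝ)⁻¹ • Matrix.of fun _ _ => (1 : ℝ) : Matrix (Fin m) (Fin m) ℝ)
    (fun j => (w j - (m : ℝ)⁻¹ • ∑ k, w k) + (u' j - u j))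
  rw [← hν] at hA
  simp only [key]
  refine hA.trans ?_
  rw [Finset.mul_sum, Finset.mul_sum, Finset.mul_sum, ← Finset.sum_add_distrib]
  refine Finset.sum_le_sum fun j _ => ?_
  refine (mul_le_mul_of_nonneg_left (norm_add_sq_le_weighted hν0 hν1 _ _)
    (sq_nonneg ν)).trans_eq ?_
  have h1 : 1 - ν ≠ 0 := by linarith
  field_simp
end

section
/- For each i ∈ [m], let f^i : ℝ^d × ℝ^p → ℝ be differentiable and let G^i(·,·;ξ^i) be stochastic estimators over random elements ξ^1, …, ξ^m such that for each i and every fixed (x,y): E[G^i(x,y;ξ^i)] = ∇_x f^i(x,y), E∥G^i(x,y;ξ^i) − ∇_x f^i(x,y)∥² ≤ σ², and almost surely (x,y) ↦ G^i(x,y;ξ^i) is L_f-Lipschitz in the blockwise sense (∥G^i(x₁,y₁;ξ^i) − G^i(x₂,y₂;ξ^i)∥ ≤ L_f∥x₁−x₂∥ + L_f∥y₁−y₂∥). Fix points x^i, x'^i ∈ ℝ^d, y^i, y'^i ∈ ℝ^p, vectors u^i ∈ ℝ^d, and α ∈ (0,1], and define the STORM updates u'^i = G^i(x'^i,y'^i;ξ^i)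 + (1−α)(u^i − G^i(x^i,y^i;ξ^i)). Then E ∑_{i=1}^m ∥u'^i − u^i∥² ≤ 4α² ∑_{i=1}^m ∥u^i − ∇_x f^i(x^i,y^i)∥² + 4α² m σ² + 16 L_f² ∑_{i=1}^m (∥x'^i − x^i∥² + ∥y'^i − y^i∥²). -/
/-! The drift splits as `u' - u = (G' - G) + α (G - ∇f) - α (u - ∇f)`, where `G'` and `G` are the
estimators at the new and the old point, on the same sample. Expanding the square with
`‖a + b - c‖² ≤ 4 (‖a‖² + ‖b‖² + ‖c‖²)`, the first square is at most
`2 Lf² (‖x' - x‖² + ‖y' - y‖²)` almost surely by the Lipschitz hypothesis, the second is controlled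
in expectation by the variance bound, and the third is deterministic. -/

open scoped BigOperators
open MeasureTheory

lemma norm_add_sub_sq_le {E : Type*} [SeminormedAddCommGroup E] (a b c : E) :
    ‖a + b - c‖ ^ 2 ≤ 4 * (‖a‖ ^ 2 + ‖b‖ ^ 2 + ‖c‖ ^ 2) := by
  have h : ‖a + b - c‖ ≤ ‖a‖ + ‖b‖ + ‖c‖ :=
    (norm_sub_le _ _).trans (by gcongr; exact norm_add_le _ _)
  have h2 : ‖a + b - c‖ ^ 2 ≤ (‖a‖ + ‖b‖ + ‖c‖) ^ 2 := by gcongr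
  nlinarith [sq_nonneg (‖a‖ - ‖b‖), sq_nonneg (‖a‖ - ‖c‖), sq_nonneg (‖b‖ - ‖c‖),
    sq_nonneg ‖a‖, sq_nonneg ‖b‖, sq_nonneg ‖c‖]

/-- Pointwise drift bound for one STORM update: `g'`, `g` are the two estimators on the same sample,
`e` is the true gradient at the old point, and `r`, `s` stand for the norms of
the displacements of the two blocks. -/
lemma storm_drift_sq_le {E : Type*} [NormedAddCommGroup E] [NormedSpace ℝ E]
    (g' g e u : E) (α L r s : ℝ) (h : ‖g' - g‖ ≤ L * r + L * s) :
    ‖g' + (1 - α) • (u - g) - u‖ ^ 2 ≤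
      4 * α ^ 2 * ‖u - e‖ ^ 2 + 4 * α ^ 2 * ‖g - e‖ ^ 2 + 16 * L ^ 2 * (r ^ 2 + s ^ 2) := by
  have hdec : g' + (1 - α) • (u - g) - u = (g' - g) + α • (g - e) - α • (u - e) := by
    module
  have h1 := norm_add_sub_sq_le (g' - g) (α • (g - e)) (α • (u - e))
  rw [← hdec, norm_smul, norm_smul, mul_pow, mul_pow, Real.norm_eq_abs, sq_abs] at h1
  have h2 : ‖g' - g‖ ^ 2 ≤ (L * r + L * s) ^ 2 := by gcongr
  nlinarith [sq_nonneg (L * r - L * s), sq_nonneg (L * r), sq_nonneg (L * s)]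

/-- bound on the expected total drift of the STORM estimators. -/
theorem stmt_10 {d p m : ℕ} {Ω X : Type*} [MeasureSpace Ω]
    [IsProbabilityMeasure (volume : Measure Ω)] [MeasurableSpace X]
    (f : Fin m → EuclideanSpace ℝ (Fin d) → EuclideanSpace ℝ (Fin p) → ℝ)
    (gx : Fin m → EuclideanSpace ℝ (Fin d) → EuclideanSpace ℝ (Fin p) →
      EuclideanSpace ℝ (Fin d))
    (G : Fin m → EuclideanSpace ℝ (Fin d) → EuclideanSpace ℝ (Fin p) → X →
      EuclideanSpace ℝ (Fin d))
    (ξ : Fin m → Ω → X) (hξmeas : ∀ i, Measurable (ξ i))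
    (Lf σ : ℝ) (hLf : 0 < Lf)
    (hgx : ∀ i x y, HasGradientAt (fun x' => f i x' y) (gx i x y) x)
    (hGmeas : ∀ i x y, Measurable (fun s => G i x y s))
    (hunbiased : ∀ i x y, ∫ ω, G i x y (ξ i ω) = gx i x y)
    (hvarint : ∀ i x y, Integrable (fun ω => ‖G i x y (ξ i ω) - gx i x y‖ ^ 2))
    (hvar : ∀ i x y, ∫ ω, ‖G i x y (ξ i ω) - gx i x y‖ ^ 2 ≤ σ ^ 2)
    (hLip : ∀ i, ∀ᵐ ω, ∀ x₁ y₁ x₂ y₂, ‖G i x₁ y₁ (ξ i ω) - G i x₂ y₂ (ξ i ω)‖ ≤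
        Lf * ‖x₁ - x₂‖ + Lf * ‖y₁ - y₂‖)
    (x x' : Fin m → EuclideanSpace ℝ (Fin d)) (y y' : Fin m → EuclideanSpace ℝ (Fin p))
    (u : Fin m → EuclideanSpace ℝ (Fin d)) (α : ℝ) (hα : α ∈ Set.Ioc (0 : ℝ) 1)
    (u' : Fin m → Ω → EuclideanSpace ℝ (Fin d))
    (hu' : ∀ i ω, u' i ω =
      G i (x' i) (y' i) (ξ i ω) + (1 - α) • (u i - G i (x i) (y i) (ξ i ω))) :
    ∫ ω, ∑ i, ‖u' i ω - u i‖ ^ 2 ≤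
      4 * α ^ 2 * ∑ i, ‖u i - gx i (x i) (y i)‖ ^ 2 + 4 * α ^ 2 * m * σ ^ 2 +
        16 * Lf ^ 2 * ∑ i, (‖x' i - x i‖ ^ 2 + ‖y' i - y i‖ ^ 2) := by
  have hint : ∀ i, Integrable (fun ω =>
      4 * α ^ 2 * ‖u i - gx i (x i) (y i)‖ ^ 2
        + 4 * α ^ 2 * ‖G i (x i) (y i) (ξ i ω) - gx i (x i) (y i)‖ ^ 2
        + 16 * Lf ^ 2 * (‖x' i - x i‖ ^ 2 + ‖y' i - y i‖ ^ 2)) := fun i =>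
    ((integrable_const _).add ((hvarint i (x i) (y i)).const_mul _)).add (integrable_const _)
  have hle : ∀ᵐ ω, ∑ i, ‖u' i ω - u i‖ ^ 2 ≤ ∑ i,
      (4 * α ^ 2 * ‖u i - gx i (x i) (y i)‖ ^ 2
        + 4 * α ^ 2 * ‖G i (x i) (y i) (ξ i ω) - gx i (x i) (y i)‖ ^ 2
        + 16 * Lf ^ 2 * (‖x' i - x i‖ ^ 2 + ‖y' i - y i‖ ^ 2)) := by
    filter_upwards [ae_all_iff.2 hLip] with ω hω
    refine Finset.sum_le_sum fun i _ => ?_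
    rw [hu']
    exact storm_drift_sq_le _ _ _ _ _ _ _ _ (hω i _ _ _ _)
  -- Only the upper bound has to be integrable, since the drift is nonnegative.
  refine (integral_mono_of_nonneg (Filter.Eventually.of_forall fun ω => by
    simp only [Pi.zero_apply]; positivity)
    (integrable_finsetSum _ fun i _ => hint i) hle).trans ?_
  rw [integral_finsetSum _ fun i _ => hint i]
  have hi : ∀ i, ∫ ω, (4 * α ^ 2 * ‖u i - gx i (x i) (y i)‖ ^ 2
        + 4 * α ^ 2 * ‖G i (x i) (y i) (ξ i ω) - gx i (x i) (y i)‖ ^ 2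
        + 16 * Lf ^ 2 * (‖x' i - x i‖ ^ 2 + ‖y' i - y i‖ ^ 2)) ≤
      4 * α ^ 2 * ‖u i - gx i (x i) (y i)‖ ^ 2 + 4 * α ^ 2 * σ ^ 2
        + 16 * Lf ^ 2 * (‖x' i - x i‖ ^ 2 + ‖y' i - y i‖ ^ 2) := by
    intro i
    have hG := (hvarint i (x i) (y i)).const_mul (4 * α ^ 2)
    rw [integral_add (f := fun ω => 4 * α ^ 2 * ‖u i - gx i (x i) (y i)‖ ^ 2
        + 4 * α ^ 2 * ‖G i (x i) (y i) (ξ i ω) - gx i (x i) (y i)‖ ^ 2)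
        ((integrable_const _).add hG) (integrable_const _),
      integral_add (integrable_const _) hG]
    simp only [integral_const_mul _ (fun ω => ‖G i (x i) (y i) (ξ i ω) - gx i (x i) (y i)‖ ^ 2),
      integral_const, probReal_univ, one_smul]
    gcongr
    exact hvar i _ _
  refine (Finset.sum_le_sum fun i _ => hi i).trans (le_of_eq ?_)
  simp only [Finset.sum_add_distrib, ← Finset.mul_sum, Finset.sum_const, Finset.card_univ,
    Fintype.card_fin, nsmul_eq_mul]
  ring
end

section
/- Let F : ℝ^d → ℝ be differentiable with L-Lipschitz gradient. Let w^1, …, w^m ∈ ℝ^d with average w̄ = (1/m)∑_{i=1}^m w^i, let x ∈ ℝ^d, let η > 0 and 0 < γ ≤ 1/(4Lη), and define x_+ = x − γη w̄. Then F(x_+) ≤ F(x) + 2γη∥∇F(x) − w̄∥² + (γη/2)·(1/m)∑_{i=1}^m ∥w^i − w̄∥² − (γη/4)·(1/m)∑_{i=1}^m ∥w^i∥². -/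
/-!
Write `a = γη`, `W` for the average of the `w i`, and `g = ∇F(x)`. The quadratic upper bound for
functions with Lipschitz gradient (`descent_of_lipschitz_gradient`) together with `aL ≤ 1/4` gives
`F(x - aW) ≤ F(x) - a⟪g, W⟫ + (a/8)‖W‖²`, and polarization replaces `-⟪g, W⟫` by
`½‖g - W‖² - ½‖g‖² - ½‖W‖²`. On the other side, the variance identity
(`mean_sq_eq_variance_add`) turns the last two terms of the claimed bound into
`(a/4)V - (a/4)‖W‖²` with `V ≥ 0` the variance, which leaves room to spare.
-/

/-- Quadratic upper bound for a function with `L`-Lipschitz gradient. Along the segment from `x`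
to `x + v`, the function `t ↦ F (x + t v) - t ⟪∇F(x), v⟫ - (L/2) t² ‖v‖²` is nonincreasing. -/
lemma descent_of_lipschitz_gradient {E : Type*} [NormedAddCommGroup E] [InnerProductSpace ℝ E]
    [CompleteSpace E] {F : E → ℝ} {gF : E → E} {L : ℝ}
    (hgF : ∀ x, HasGradientAt F (gF x) x)
    (hLip : ∀ x₁ x₂, ‖gF x₁ - gF x₂‖ ≤ L * ‖x₁ - x₂‖) (x v : E) :
    F (x + v) ≤ F x + inner ℝ (gF x) v + L / 2 * ‖v‖ ^ 2 := by
  have hder : ∀ t : ℝ, HasDerivAt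
      (fun t : ℝ => F (x + t • v) - t * inner ℝ (gF x) v - L / 2 * ‖v‖ ^ 2 * t ^ 2)
      (inner ℝ (gF (x + t • v)) v - inner ℝ (gF x) v - L * ‖v‖ ^ 2 * t) t := by
    intro t
    have h1 : HasDerivAt (fun t : ℝ => x + t • v) v t := by
      simpa using ((hasDerivAt_id t).smul_const v).const_add x
    have h2 : HasDerivAt (fun t : ℝ => F (x + t • v)) (inner ℝ (gF (x + t • v)) v) t := by
      simpa [Function.comp_def] using (hgF (x + t • v)).hasFDerivAt.comp_hasDerivAt t h1
    have h3 := (hasDerivAt_id t).mul_const (inner ℝ (gF x) v)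
    have h4 := (hasDerivAt_pow 2 t).const_mul (L / 2 * ‖v‖ ^ 2)
    refine ((h2.sub h3).sub h4).congr_deriv ?_
    norm_num
    ring
  have hanti := antitoneOn_of_deriv_nonpos (convex_Icc (0 : ℝ) 1)
    (fun t _ => (hder t).continuousAt.continuousWithinAt)
    (fun t _ => (hder t).differentiableAt.differentiableWithinAt)
    (by
      intro t ht
      rw [interior_Icc] at ht
      rw [(hder t).deriv, ← inner_sub_left]
      have hg : ‖gF (x + t • v) - gF x‖ ≤ L * (t * ‖v‖) := by
        simpa [norm_smul, abs_of_pos ht.1] using hLip (x + t • v) x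
      have := real_inner_le_norm (gF (x + t • v) - gF x) v
      nlinarith [mul_le_mul_of_nonneg_right hg (norm_nonneg v)])
  have := hanti (Set.left_mem_Icc.2 zero_le_one) (Set.right_mem_Icc.2 zero_le_one) zero_le_one
  norm_num at this
  linarith

/-- The mean of squared norms is the variance plus the squared norm of the mean. For `m = 0` all
terms vanish. -/
lemma mean_sq_eq_variance_add {E : Type*} [NormedAddCommGroup E] [InnerProductSpace ℝ E]
    {m : ℕ} (w : Fin m → E) :
    (m : ℝ)⁻¹ * ∑ i, ‖w i‖ ^ 2 =
      (m : ℝ)⁻¹ * ∑ i, ‖w i - (m : ℝ)⁻¹ • ∑ k, w k‖ ^ 2 + ‖(m : ℝ)⁻¹ • ∑ k, w k‖ ^ 2 := by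
  rcases Nat.eq_zero_or_pos m with rfl | hm
  · simp
  have hm' : (m : ℝ) ≠ 0 := by positivity
  set W := (m : ℝ)⁻¹ • ∑ k, w k with hW
  have hs : ∑ k, w k = (m : ℝ) • W := by rw [hW, smul_inv_smul₀ hm']
  have h : ∑ i, ‖w i - W‖ ^ 2 = ∑ i, ‖w i‖ ^ 2 - m * ‖W‖ ^ 2 := by
    simp only [norm_sub_sq_real, Finset.sum_add_distrib, Finset.sum_sub_distrib,
      ← Finset.mul_sum, ← sum_inner, hs, real_inner_smul_left, real_inner_self_eq_norm_sq,
      Finset.sum_const, Finset.card_univ, Fintype.card_fin, nsmul_eq_mul]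
    ring
  rw [h]
  field_simp
  ring


open scoped BigOperators

/-- descent lemma for the averaged gradient step of an L-smooth function. -/
theorem stmt_11 {d m : ℕ}
    (F : EuclideanSpace ℝ (Fin d) → ℝ)
    (gF : EuclideanSpace ℝ (Fin d) → EuclideanSpace ℝ (Fin d))
    (L : ℝ) (hL : 0 < L)
    (hgF : ∀ x, HasGradientAt F (gF x) x)
    (hLip : ∀ x₁ x₂, ‖gF x₁ - gF x₂‖ ≤ L * ‖x₁ - x₂‖)
    (w : Fin m → EuclideanSpace ℝ (Fin d))
    (x : EuclideanSpace ℝ (Fin d)) (η γ : ℝ)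
    (hη : 0 < η) (hγ0 : 0 < γ) (hγ : γ ≤ 1 / (4 * L * η))
    (xp : EuclideanSpace ℝ (Fin d))
    (hxp : xp = x - (γ * η) • ((m : ℝ)⁻¹ • ∑ i, w i)) :
    F xp ≤ F x + 2 * γ * η * ‖gF x - (m : ℝ)⁻¹ • ∑ i, w i‖ ^ 2 +
      γ * η / 2 * ((m : ℝ)⁻¹ * ∑ i, ‖w i - (m : ℝ)⁻¹ • ∑ k, w k‖ ^ 2) -
      γ * η / 4 * ((m : ℝ)⁻¹ * ∑ i, ‖w i‖ ^ 2) := by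
  have hvar := mean_sq_eq_variance_add w
  have hV : 0 ≤ (m : ℝ)⁻¹ * ∑ i, ‖w i - (m : ℝ)⁻¹ • ∑ k, w k‖ ^ 2 := by positivity
  rw [hvar]
  set V := (m : ℝ)⁻¹ * ∑ i, ‖w i - (m : ℝ)⁻¹ • ∑ k, w k‖ ^ 2
  set W := (m : ℝ)⁻¹ • ∑ i, w i
  have hd := descent_of_lipschitz_gradient hgF hLip x (-((γ * η) • W))
  rw [← sub_eq_add_neg, ← hxp, inner_neg_right, real_inner_smul_right, norm_neg, norm_smul,
    Real.norm_of_nonneg (by positivity)] at hd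
  have ha : 0 < γ * η := by positivity
  have hstep : L * (γ * η) ≤ 1 / 4 := by
    rw [le_div_iff₀ (by positivity)] at hγ
    linarith
  have hquad : L / 2 * (γ * η * ‖W‖) ^ 2 ≤ γ * η / 8 * ‖W‖ ^ 2 := by
    have := mul_le_mul_of_nonneg_right hstep (show 0 ≤ γ * η / 2 * ‖W‖ ^ 2 by positivity)
    linarith
  have hpol : γ * η * inner ℝ (gF x) W =
      γ * η * (‖gF x‖ ^ 2 + ‖W‖ ^ 2 - ‖gF x - W‖ ^ 2) / 2 := by
    rw [norm_sub_sq_real]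
    ring
  have h1 : 0 ≤ γ * η * ‖gF x‖ ^ 2 := by positivity
  have h2 : 0 ≤ γ * η * ‖W‖ ^ 2 := by positivity
  have h3 : 0 ≤ γ * η * ‖gF x - W‖ ^ 2 := by positivity
  have h4 : 0 ≤ γ * η * V := by positivity
  linarith
end

section
/- Let f : ℝ^d × ℝ^p → ℝ be differentiable and blockwise L_f-smooth; suppose for every x the function y ↦ f(x,y) attains its supremum, satisfies the μ-PL condition for maximization (with μ ≤ L_f), and satisfies the quadratic-growth bound ∥y − y*(x)∥² ≤ (2/μ)(F(x) − f(x,y)) for a maximizer y*(x), where F(x) = max_{y'} f(x,y'); suppose moreover F is differentiable with ∇F(x) = ∇_x f(x,y*(x)) and ∇F is L-Lipschitz with L = L_f(1 + L_f/(2μ)). Fix x̄ ∈ ℝ^d, ȳ ∈ ℝ^p, w_x ∈ ℝ^d, w_y ∈ ℝ^p, η ∈ (0,1], and step sizes with 0 < γ ≤ λμ/(16L) and 0 < λ ≤ 1/(2L_f η). Define x̄_+ = x̄ − γη w_x and ȳ_+ = ȳ + λη w_y. Then F(x̄_+) − f(x̄_+, ȳ_+) ≤ (1 − ηλμ/2)(F(x̄)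 − f(x̄, ȳ)) + (ηγ/8)∥w_x∥² − (ηλ/4)∥w_y∥² + ηλ∥∇_y f(x̄, ȳ) − w_y∥². -/
/-!
The step is split as `(x̄, ȳ) → (x̄, ȳ₊) → (x̄₊, ȳ₊)`, the dual block first. Write `s = ηλ`, `t = ηγ`,
`g = ∇_y f(x̄, ȳ)` and `Δ = F(x̄) - f(x̄, ȳ)`.

* Dual step. The quadratic lower bound for the smooth function `f(x̄, ·)`, the identity
  `-⟪g, w⟫ = (‖g - w‖² - ‖g‖² - ‖w‖²) / 2` and the PL inequality give, as `s * Lf ≤ 1/2`,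
  `Δ' ≤ (1 - sμ) Δ - s/4 ‖w_y‖² + s/2 ‖g - w_y‖²` for the gap `Δ' = F(x̄) - f(x̄, ȳ₊)`.
* Primal step. Quadratic bounds for `F` and `f(·, ȳ₊)` leave the cross term
  `t ‖∇F(x̄) - ∇ₓf(x̄, ȳ₊)‖ ‖w_x‖ ≤ t Lf ‖ȳ₊ - y*(x̄)‖ ‖w_x‖`. Quadratic growth at `ȳ₊` and
  Young's inequality bound it by `(sμ/2) Δ'` plus a multiple of `‖w_x‖²`.

Measuring the cross term at `ȳ₊`, instead of at `ȳ`, avoids a product `‖w_x‖ ‖w_y‖`, for which the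
dual step leaves no room. The two steps combine through `(1 + sμ/2)(1 - sμ) ≤ 1 - sμ/2`, and the
bound on `γ` makes the total coefficient of `‖w_x‖²` at most `t/8`.
-/

open scoped BigOperators

/-- Descent lemma: a function with `K`-Lipschitz gradient lies below its quadratic model at `u`. -/
lemma le_quadratic_model {n : ℕ} {φ : EuclideanSpace ℝ (Fin n) → ℝ}
    {g : EuclideanSpace ℝ (Fin n) → EuclideanSpace ℝ (Fin n)} {K : ℝ}
    (hg : ∀ x, HasGradientAt φ (g x) x) (hK : ∀ x y, ‖g x - g y‖ ≤ K * ‖x - y‖)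
    (u v : EuclideanSpace ℝ (Fin n)) :
    φ (u + v) ≤ φ u + inner ℝ (g u) v + K / 2 * ‖v‖ ^ 2 := by
  -- the gap to the quadratic model along the segment is antitone in the time `τ ∈ [0, 1]`
  have hd : ∀ τ : ℝ, HasDerivAt
      (fun τ : ℝ => φ (u + τ • v) - τ * inner ℝ (g u) v - K / 2 * ‖v‖ ^ 2 * τ ^ 2)
      (inner ℝ (g (u + τ • v)) v - inner ℝ (g u) v - K * ‖v‖ ^ 2 * τ) τ := by
    intro τ
    have h1 : HasDerivAt (fun τ : ℝ => u + τ • v) v τ := by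
      simpa using ((hasDerivAt_id τ).smul_const v).const_add u
    have h2 := (hg (u + τ • v)).hasFDerivAt.comp_hasDerivAt τ h1
    have h3 := (h2.sub ((hasDerivAt_id τ).mul_const (inner ℝ (g u) v))).sub
      ((hasDerivAt_pow 2 τ).const_mul (K / 2 * ‖v‖ ^ 2))
    refine h3.congr_deriv ?_
    simp
    ring
  have hanti := antitoneOn_of_deriv_nonpos (convex_Icc (0 : ℝ) 1)
    (fun τ _ => (hd τ).continuousAt.continuousWithinAt)
    (fun τ _ => (hd τ).differentiableAt.differentiableWithinAt)
    (fun τ hτ => by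
      rw [interior_Icc] at hτ
      rw [(hd τ).deriv, ← inner_sub_left]
      have h1 := real_inner_le_norm (g (u + τ • v) - g u) v
      have h2 := hK (u + τ • v) u
      rw [add_sub_cancel_left, norm_smul, Real.norm_of_nonneg hτ.1.le] at h2
      nlinarith [mul_le_mul_of_nonneg_right h2 (norm_nonneg v)])
  have h := hanti (Set.left_mem_Icc.2 zero_le_one) (Set.right_mem_Icc.2 zero_le_one) zero_le_one
  simp at h
  linarith

lemma quadratic_model_le {n : ℕ} {φ : EuclideanSpace ℝ (Fin n) → ℝ}
    {g : EuclideanSpace ℝ (Fin n) → EuclideanSpace ℝ (Fin n)} {K : ℝ}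
    (hg : ∀ x, HasGradientAt φ (g x) x) (hK : ∀ x y, ‖g x - g y‖ ≤ K * ‖x - y‖)
    (u v : EuclideanSpace ℝ (Fin n)) :
    φ u + inner ℝ (g u) v - K / 2 * ‖v‖ ^ 2 ≤ φ (u + v) := by
  have h := le_quadratic_model (φ := fun x => -φ x) (g := fun x => -g x) (K := K)
    (fun x => by
      rw [hasGradientAt_iff_hasFDerivAt, map_neg]
      exact (hg x).hasFDerivAt.neg)
    (fun x y => by rw [neg_sub_neg, norm_sub_rev]; exact hK x y) u v
  simp only [inner_neg_left] at h
  linarith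

/-- descent of the primal-dual residual `F(x) - f(x,y)` along one joint
gradient-descent-ascent step (Lemma 3 of the paper). -/
theorem stmt_12 {d p : ℕ}
    (f : EuclideanSpace ℝ (Fin d) → EuclideanSpace ℝ (Fin p) → ℝ)
    (gx : EuclideanSpace ℝ (Fin d) → EuclideanSpace ℝ (Fin p) → EuclideanSpace ℝ (Fin d))
    (gy : EuclideanSpace ℝ (Fin d) → EuclideanSpace ℝ (Fin p) → EuclideanSpace ℝ (Fin p))
    (ystar : EuclideanSpace ℝ (Fin d) → EuclideanSpace ℝ (Fin p))
    (Lf μ L : ℝ) (hLf : 0 < Lf) (hμ : 0 < μ) (hμLf : μ ≤ Lf)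
    (hL : L = Lf * (1 + Lf / (2 * μ)))
    -- `gx`, `gy` are the blockwise gradients of `f`, which is blockwise L_f-smooth
    (hgx : ∀ x y, HasGradientAt (fun x' => f x' y) (gx x y) x)
    (hgy : ∀ x y, HasGradientAt (fun y' => f x y') (gy x y) y)
    (hxx : ∀ x₁ x₂ y, ‖gx x₁ y - gx x₂ y‖ ≤ Lf * ‖x₁ - x₂‖)
    (hxy : ∀ x y₁ y₂, ‖gx x y₁ - gx x y₂‖ ≤ Lf * ‖y₁ - y₂‖)
    (hyx : ∀ x₁ x₂ y, ‖gy x₁ y - gy x₂ y‖ ≤ Lf * ‖x₁ - x₂‖)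
    (hyy : ∀ x y₁ y₂, ‖gy x y₁ - gy x y₂‖ ≤ Lf * ‖y₁ - y₂‖)
    -- `ystar x` attains the maximum, PL condition and quadratic growth hold
    (hmax : ∀ x y, f x y ≤ f x (ystar x))
    (hPL : ∀ x y, 2 * μ * (f x (ystar x) - f x y) ≤ ‖gy x y‖ ^ 2)
    (hQG : ∀ x y, ‖y - ystar x‖ ^ 2 ≤ 2 / μ * (f x (ystar x) - f x y))
    -- `F = f (·, ystar ·)` is differentiable with an L-Lipschitz gradient
    (hgF : ∀ x, HasGradientAt (fun x' => f x' (ystar x')) (gx x (ystar x)) x)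
    (hgFLip : ∀ x₁ x₂, ‖gx x₁ (ystar x₁) - gx x₂ (ystar x₂)‖ ≤ L * ‖x₁ - x₂‖)
    (xb : EuclideanSpace ℝ (Fin d)) (yb : EuclideanSpace ℝ (Fin p))
    (wx : EuclideanSpace ℝ (Fin d)) (wy : EuclideanSpace ℝ (Fin p))
    (η γ lam : ℝ) (hη : η ∈ Set.Ioc (0 : ℝ) 1)
    (hγ0 : 0 < γ) (hγ : γ ≤ lam * μ / (16 * L))
    (hlam0 : 0 < lam) (hlam : lam ≤ 1 / (2 * Lf * η))
    (xbp : EuclideanSpace ℝ (Fin d)) (ybp : EuclideanSpace ℝ (Fin p))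
    (hxbp : xbp = xb - (γ * η) • wx) (hybp : ybp = yb + (lam * η) • wy) :
    f xbp (ystar xbp) - f xbp ybp ≤
      (1 - η * lam * μ / 2) * (f xb (ystar xb) - f xb yb) +
        η * γ / 8 * ‖wx‖ ^ 2 - η * lam / 4 * ‖wy‖ ^ 2 +
        η * lam * ‖gy xb yb - wy‖ ^ 2 := by
  obtain ⟨hη0, -⟩ := hη
  obtain ⟨s, hs⟩ : ∃ s, s = η * lam := ⟨_, rfl⟩
  obtain ⟨t, ht⟩ : ∃ t, t = η * γ := ⟨_, rfl⟩
  have hs0 : 0 < s := by rw [hs]; positivity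
  have ht0 : 0 < t := by rw [ht]; positivity
  have hLLf : Lf ≤ L := by
    rw [hL]
    have : 0 < Lf * (Lf / (2 * μ)) := by positivity
    linarith
  have hL0 : 0 < L := hLf.trans_le hLLf
  have hLμ : L * μ = Lf * μ + Lf ^ 2 / 2 := by
    rw [hL]; field_simp
  have hsLf : s * Lf ≤ 1 / 2 := by
    rw [le_div_iff₀ (by positivity)] at hlam
    rw [hs]; linarith
  have hsμ : s * μ ≤ 1 / 2 := (mul_le_mul_of_nonneg_left hμLf hs0.le).trans hsLf
  have htL : 16 * (t * L) ≤ s * μ := by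
    rw [le_div_iff₀ (by positivity)] at hγ
    have := mul_le_mul_of_nonneg_left hγ hη0.le
    rw [hs, ht]; linarith
  have hsm : s * μ * (1 / 2) = η * lam * μ / 2 := by rw [hs]; ring
  rw [← hsm, ← hs, ← ht]
  have hx : xbp = xb + (-t) • wx := by
    rw [hxbp, neg_smul, ← sub_eq_add_neg, ht, mul_comm γ]
  have hy : ybp = yb + s • wy := by rw [hybp, hs, mul_comm lam]
  -- the dual step, at the primal point `xb`
  have hdual : f xb (ystar xb) - f xb ybp ≤
      (1 - s * μ) * (f xb (ystar xb) - f xb yb) - s / 4 * ‖wy‖ ^ 2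
        + s / 2 * ‖gy xb yb - wy‖ ^ 2 := by
    have h1 := quadratic_model_le (hgy xb) (hyy xb) yb (s • wy)
    rw [← hy, inner_smul_right, norm_smul, Real.norm_of_nonneg hs0.le] at h1
    have h2 := norm_sub_sq_real (gy xb yb) wy
    have h3 := mul_le_mul_of_nonneg_left (hPL xb yb) hs0.le
    have h4 := mul_le_mul_of_nonneg_right hsLf (mul_nonneg hs0.le (sq_nonneg ‖wy‖))
    rw [h2]
    linear_combination h1 + h3 / 2 + h4 / 2
  -- the primal step, at the dual point `ybp`
  obtain ⟨D, hD⟩ : ∃ D, D = f xb (ystar xb) - f xb ybp := ⟨_, rfl⟩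
  have hD0 : 0 ≤ D := by rw [hD]; linarith [hmax xb ybp]
  have hprimal : f xbp (ystar xbp) - f xbp ybp ≤
      D + t * (Lf * ‖ybp - ystar xb‖ * ‖wx‖) + L * t ^ 2 * ‖wx‖ ^ 2 := by
    have h1 := le_quadratic_model hgF hgFLip xb ((-t) • wx)
    have h2 := quadratic_model_le (fun x => hgx x ybp) (fun x₁ x₂ => hxx x₁ x₂ ybp) xb ((-t) • wx)
    rw [← hx, inner_smul_right, norm_smul, norm_neg, Real.norm_of_nonneg ht0.le] at h1 h2
    have h3 := real_inner_le_norm (gx xb ybp - gx xb (ystar xb)) wx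
    rw [inner_sub_left] at h3
    have h4 := h3.trans
      (mul_le_mul_of_nonneg_right (hxy xb ybp (ystar xb)) (norm_nonneg wx))
    have h5 := mul_le_mul_of_nonneg_left h4 ht0.le
    have h6 := mul_le_mul_of_nonneg_right hLLf (sq_nonneg (t * ‖wx‖))
    rw [hD]
    linear_combination h1 + h2 + h5 + h6 / 2
  -- Young's inequality, weighted so that quadratic growth leaves exactly `(sμ/2) D`
  have hyoung : t * (Lf * ‖ybp - ystar xb‖ * ‖wx‖) ≤
      s * μ / 2 * D + t ^ 2 * Lf ^ 2 / (s * μ ^ 2) * ‖wx‖ ^ 2 := by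
    have h1 := hQG xb ybp
    rw [← hD] at h1
    have h2 := mul_le_mul_of_nonneg_left h1 (by positivity : 0 ≤ s * μ ^ 2 / 4)
    have h3 : s * μ ^ 2 / 4 * (2 / μ * D) = s * μ / 2 * D := by field_simp; ring
    have h4 : s * μ ^ 2 / 4 * ‖ybp - ystar xb‖ ^ 2 + t ^ 2 * Lf ^ 2 / (s * μ ^ 2) * ‖wx‖ ^ 2
        - t * (Lf * ‖ybp - ystar xb‖ * ‖wx‖)
        = (s * μ ^ 2 * ‖ybp - ystar xb‖ / 2 - t * Lf * ‖wx‖) ^ 2 / (s * μ ^ 2) := by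
      field_simp; ring
    have h5 : 0 ≤ (s * μ ^ 2 * ‖ybp - ystar xb‖ / 2 - t * Lf * ‖wx‖) ^ 2 / (s * μ ^ 2) := by
      positivity
    linarith
  have hcoef : t ^ 2 * Lf ^ 2 / (s * μ ^ 2) + L * t ^ 2 ≤ t / 8 := by
    have h1 : t * Lf ^ 2 / (s * μ ^ 2) ≤ (L - Lf) / (8 * L) := by
      -- `Lf² = 2μ (L - Lf)` turns this into the step size condition on `t`
      have e : Lf ^ 2 = 2 * (L - Lf) * μ := by linear_combination -2 * hLμ
      rw [e, div_le_div_iff₀ (by positivity) (by positivity)]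
      have := mul_le_mul_of_nonneg_right htL (mul_nonneg (sub_nonneg.2 hLLf) hμ.le)
      linarith
    have h2 : L * t ≤ Lf / (8 * L) := by
      rw [le_div_iff₀ (by positivity)]
      -- `L t ≤ sμ/16` and `μ L ≤ (3/2) Lf²`, `s Lf ≤ 1/2`
      have a := mul_le_mul_of_nonneg_right htL hL0.le
      have b : L * μ ≤ 3 / 2 * Lf ^ 2 := by nlinarith
      have c := mul_le_mul_of_nonneg_left b hs0.le
      have e := mul_le_mul_of_nonneg_right hsLf hLf.le
      linarith
    have h3 : (L - Lf) / (8 * L) + Lf / (8 * L) = 1 / 8 := by field_simp; ring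
    have h4 : t * (t * Lf ^ 2 / (s * μ ^ 2) + L * t) ≤ t * (1 / 8) :=
      mul_le_mul_of_nonneg_left (by linarith) ht0.le
    calc _ = t * (t * Lf ^ 2 / (s * μ ^ 2) + L * t) := by ring
      _ ≤ _ := by linarith
  have hcoef' := mul_le_mul_of_nonneg_right hcoef (sq_nonneg ‖wx‖)
  rw [← hD] at hdual
  have hΔ0 : 0 ≤ f xb (ystar xb) - f xb yb := by linarith [hmax xb yb]
  obtain ⟨Δ, hΔ⟩ : ∃ Δ, Δ = f xb (ystar xb) - f xb yb := ⟨_, rfl⟩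
  rw [← hΔ] at hdual hΔ0 ⊢
  have hsμ0 : 0 < s * μ := by positivity
  have hmul := mul_le_mul_of_nonneg_left hdual (by linarith : 0 ≤ 1 + s * μ / 2)
  have r1 : 0 ≤ (s * μ) ^ 2 * Δ := by positivity
  have r2 : 0 ≤ s * μ * (s * ‖wy‖ ^ 2) := by positivity
  have r3 := mul_le_mul_of_nonneg_right hsμ
    (mul_nonneg hs0.le (sq_nonneg ‖gy xb yb - wy‖))
  have r4 : 0 ≤ s * ‖gy xb yb - wy‖ ^ 2 := by positivity
  linear_combination hprimal + hyoung + hcoef' + hmul + r1 / 2 + r2 / 8 + r3 / 4 + 3 / 8 * r4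
end

section
/- Let f : ℝ^d × ℝ^p → ℝ be differentiable and blockwise L_f-smooth, let F(x) = max_{y'} f(x,y') be attained for every x with a maximizer y*(x), suppose F is differentiable with ∇F(x) = ∇_x f(x,y*(x)) and ∇F is L-Lipschitz with L_f ≤ L, and suppose the quadratic-growth bound ∥y − y*(x)∥² ≤ (2/μ)(F(x) − f(x,y)) holds for all x, y. Fix x̄ ∈ ℝ^d, ȳ ∈ ℝ^p, w_x ∈ ℝ^d, η ∈ (0,1], γ > 0, and define x̂ = x̄ − γ w_x and x̄_+ = x̄ + η(x̂ − x̄). Then F(x̄_+) − f(x̄_+, ȳ) ≤ (1 + 4L_f²ηγ/μ)(F(x̄) − f(x̄, ȳ)) + η(1/(8γ) + ηL)∥x̂ − x̄∥². -/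
/-!
Write `D x = F x - f(x, ȳ)` with `F x = f(x, y*(x))`. Its gradient
`∇F(x) - ∇ₓf(x, ȳ) = ∇ₓf(x, y*(x)) - ∇ₓf(x, ȳ)` is `(L + L_f)`-Lipschitz, hence `2L`-Lipschitz, so the
descent lemma (`descent_of_gradient_lipschitz`) along the step `s = η (x̂ - x̄)` gives
`D(x̄ + s) ≤ D(x̄) + ⟪∇D(x̄), s⟫ + L ‖s‖²`.
By blockwise smoothness `‖∇D(x̄)‖ ≤ L_f ‖ȳ - y*(x̄)‖`. Young's inequality
`L_f a b ≤ 2 γ L_f² a² + b² / (8 γ)` splits the inner product, and quadratic growth bounds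
`a² = ‖ȳ - y*(x̄)‖²` by `(2 / μ) D(x̄)`.
-/

/-- Descent lemma, needing the Lipschitz bound on the gradient only relative to the base point `x`. -/
lemma descent_of_gradient_lipschitz {E : Type*} [NormedAddCommGroup E] [InnerProductSpace ℝ E]
    [CompleteSpace E] {g : E → ℝ} {g' : E → E} {M : ℝ} (x s : E)
    (hg : ∀ z, HasGradientAt g (g' z) z) (hLip : ∀ z, ‖g' z - g' x‖ ≤ M * ‖z - x‖) :
    g (x + s) ≤ g x + inner ℝ (g' x) s + M / 2 * ‖s‖ ^ 2 := by
  -- The gap between `g` and its quadratic upper model is nonincreasing along the segment.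
  let φ : ℝ → ℝ := fun t => g (x + t • s) - t * inner ℝ (g' x) s - M / 2 * ‖s‖ ^ 2 * t ^ 2
  have hφ : ∀ t, HasDerivAt φ
      (inner ℝ (g' (x + t • s)) s - inner ℝ (g' x) s - M * ‖s‖ ^ 2 * t) t := by
    intro t
    have hline : HasDerivAt (fun t : ℝ => x + t • s) s t := by
      simpa using ((hasDerivAt_id t).smul_const s).const_add x
    have h1 : HasDerivAt (fun t : ℝ => g (x + t • s)) (inner ℝ (g' (x + t • s)) s) t := by
      have h := (hg (x + t • s)).hasFDerivAt.comp_hasDerivAt t hline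
      rwa [InnerProductSpace.toDual_apply_apply] at h
    have h2 : HasDerivAt (fun t : ℝ => t * inner ℝ (g' x) s) (inner ℝ (g' x) s) t := by
      simpa using (hasDerivAt_id t).mul_const (inner ℝ (g' x) s)
    have h3 : HasDerivAt (fun t : ℝ => M / 2 * ‖s‖ ^ 2 * t ^ 2) (M * ‖s‖ ^ 2 * t) t := by
      refine ((hasDerivAt_pow 2 t).const_mul (M / 2 * ‖s‖ ^ 2)).congr_deriv ?_
      norm_num
      ring
    exact (h1.sub h2).sub h3
  have hanti : AntitoneOn φ (Set.Icc 0 1) := by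
    refine antitoneOn_of_deriv_nonpos (convex_Icc 0 1)
      (fun t _ => (hφ t).continuousAt.continuousWithinAt)
      (fun t _ => (hφ t).differentiableAt.differentiableWithinAt) fun t ht => ?_
    rw [interior_Icc] at ht
    rw [(hφ t).deriv, ← inner_sub_left]
    have h1 := real_inner_le_norm (g' (x + t • s) - g' x) s
    have h2 := hLip (x + t • s)
    rw [add_sub_cancel_left, norm_smul, Real.norm_of_nonneg ht.1.le] at h2
    have h3 := mul_le_mul_of_nonneg_right h2 (norm_nonneg s)
    linarith
  have h := hanti (Set.left_mem_Icc.2 zero_le_one) (Set.right_mem_Icc.2 zero_le_one) zero_le_one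
  simp only [φ, one_smul, zero_smul, add_zero] at h
  linarith

open scoped BigOperators

/-- growth of the residual `F(x) - f(x,ȳ)` along one primal step. -/
theorem stmt_13 {d p : ℕ}
    (f : EuclideanSpace ℝ (Fin d) → EuclideanSpace ℝ (Fin p) → ℝ)
    (gx : EuclideanSpace ℝ (Fin d) → EuclideanSpace ℝ (Fin p) → EuclideanSpace ℝ (Fin d))
    (gy : EuclideanSpace ℝ (Fin d) → EuclideanSpace ℝ (Fin p) → EuclideanSpace ℝ (Fin p))
    (ystar : EuclideanSpace ℝ (Fin d) → EuclideanSpace ℝ (Fin p))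
    (Lf μ L : ℝ) (hLf : 0 < Lf) (hμ : 0 < μ) (hLfL : Lf ≤ L)
    -- blockwise L_f-smoothness of f
    (hgx : ∀ x y, HasGradientAt (fun x' => f x' y) (gx x y) x)
    (hgy : ∀ x y, HasGradientAt (fun y' => f x y') (gy x y) y)
    (hxx : ∀ x₁ x₂ y, ‖gx x₁ y - gx x₂ y‖ ≤ Lf * ‖x₁ - x₂‖)
    (hxy : ∀ x y₁ y₂, ‖gx x y₁ - gx x y₂‖ ≤ Lf * ‖y₁ - y₂‖)
    (hyx : ∀ x₁ x₂ y, ‖gy x₁ y - gy x₂ y‖ ≤ Lf * ‖x₁ - x₂‖)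
    (hyy : ∀ x y₁ y₂, ‖gy x y₁ - gy x y₂‖ ≤ Lf * ‖y₁ - y₂‖)
    -- `ystar x` is a maximizer of `f x ·`, so `F x = f x (ystar x)`
    (hmax : ∀ x y, f x y ≤ f x (ystar x))
    -- `F` is differentiable with an L-Lipschitz gradient
    (hgF : ∀ x, HasGradientAt (fun x' => f x' (ystar x')) (gx x (ystar x)) x)
    (hgFLip : ∀ x₁ x₂, ‖gx x₁ (ystar x₁) - gx x₂ (ystar x₂)‖ ≤ L * ‖x₁ - x₂‖)
    -- quadratic growth bound
    (hQG : ∀ x y, ‖y - ystar x‖ ^ 2 ≤ 2 / μ * (f x (ystar x) - f x y))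
    (xb : EuclideanSpace ℝ (Fin d)) (yb : EuclideanSpace ℝ (Fin p))
    (wx : EuclideanSpace ℝ (Fin d))
    (η γ : ℝ) (hη : η ∈ Set.Ioc (0 : ℝ) 1) (hγ : 0 < γ)
    (xh xbp : EuclideanSpace ℝ (Fin d))
    (hxh : xh = xb - γ • wx) (hxbp : xbp = xb + η • (xh - xb)) :
    f xbp (ystar xbp) - f xbp yb ≤
      (1 + 4 * Lf ^ 2 * η * γ / μ) * (f xb (ystar xb) - f xb yb) +
        η * (1 / (8 * γ) + η * L) * ‖xh - xb‖ ^ 2 := by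
  obtain ⟨hη0, -⟩ := hη
  set a := ‖yb - ystar xb‖
  set b := ‖xh - xb‖
  have hD : ∀ z, HasGradientAt (fun x => f x (ystar x) - f x yb)
      (gx z (ystar z) - gx z yb) z := fun z => by
    rw [hasGradientAt_iff_hasFDerivAt, map_sub]
    exact (hgF z).hasFDerivAt.sub (hgx z yb).hasFDerivAt
  have hLip : ∀ z, ‖(gx z (ystar z) - gx z yb) - (gx xb (ystar xb) - gx xb yb)‖
      ≤ 2 * L * ‖z - xb‖ := fun z => by
    rw [sub_sub_sub_comm]
    have h1 := norm_sub_le (gx z (ystar z) - gx xb (ystar xb)) (gx z yb - gx xb yb)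
    have h2 := mul_le_mul_of_nonneg_right hLfL (norm_nonneg (z - xb))
    linarith [hgFLip z xb, hxx z xb yb]
  have hdesc := descent_of_gradient_lipschitz (g := fun x => f x (ystar x) - f x yb)
    (g' := fun z => gx z (ystar z) - gx z yb) xb (η • (xh - xb)) hD hLip
  simp only [← hxbp, inner_smul_right, norm_smul, Real.norm_of_nonneg hη0.le] at hdesc
  have hinner : inner ℝ (gx xb (ystar xb) - gx xb yb) (xh - xb) ≤ Lf * a * b := by
    refine (real_inner_le_norm _ _).trans (mul_le_mul_of_nonneg_right ?_ (norm_nonneg _))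
    simpa only [a, norm_sub_rev (ystar xb) yb] using hxy xb (ystar xb) yb
  have hyoung : Lf * a * b ≤ 2 * γ * Lf ^ 2 * a ^ 2 + 1 / (8 * γ) * b ^ 2 := by
    have hsq : 2 * γ * Lf ^ 2 * a ^ 2 + 1 / (8 * γ) * b ^ 2 - Lf * a * b
        = (4 * γ * Lf * a - b) ^ 2 / (8 * γ) := by
      field_simp
      ring
    have : 0 ≤ (4 * γ * Lf * a - b) ^ 2 / (8 * γ) := by positivity
    linarith
  have hgrowth : 2 * γ * Lf ^ 2 * a ^ 2
      ≤ 4 * Lf ^ 2 * γ / μ * (f xb (ystar xb) - f xb yb) := by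
    calc 2 * γ * Lf ^ 2 * a ^ 2
        ≤ 2 * γ * Lf ^ 2 * (2 / μ * (f xb (ystar xb) - f xb yb)) :=
          mul_le_mul_of_nonneg_left (hQG xb yb) (by positivity)
      _ = _ := by ring
  have hcross := mul_le_mul_of_nonneg_left
    (hinner.trans (hyoung.trans (add_le_add_left hgrowth _))) hη0.le
  refine hdesc.trans ?_
  calc _ ≤ f xb (ystar xb) - f xb yb
        + η * (4 * Lf ^ 2 * γ / μ * (f xb (ystar xb) - f xb yb) + 1 / (8 * γ) * b ^ 2)
        + 2 * L / 2 * (η * b) ^ 2 := by gcongr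
    _ = _ := by ring
end

section
/- Let f : ℝ^d × ℝ^p → ℝ be differentiable and blockwise L_f-smooth, and suppose for every x the function y ↦ f(x,y) attains its supremum and satisfies the μ-PL condition for maximization; let F(x) = max_{y'} f(x,y'). Fix x̄, x̄_+ ∈ ℝ^d, ȳ ∈ ℝ^p, w_y ∈ ℝ^p, η ∈ (0,1], λ > 0, and define ŷ = ȳ + λ w_y and ȳ_+ = ȳ + η(ŷ − ȳ). Then F(x̄_+) − f(x̄_+, ȳ_+) ≤ (1 − ηλμ)(F(x̄_+) − f(x̄_+, ȳ)) − (η/(2λ))∥ŷ − ȳ∥² + ηλ L_f² ∥x̄_+ − x̄∥² + ηλ∥∇_y f(x̄, ȳ) − w_y∥² + (L_f η²/2)∥ŷ − ȳ∥². -/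
/-!
The ascent step moves `y` by `η • (lam • wy)`, so `Lf`-smoothness of `f xbp ·` gives the quadratic
lower bound
`f xbp ybp ≥ f xbp yb + η * lam * ⟪g, wy⟫ - Lf / 2 * ‖η • lam • wy‖ ^ 2` with `g = gy xbp yb`.
By polarization `2 * ⟪g, wy⟫ = ‖g‖ ^ 2 + ‖wy‖ ^ 2 - ‖g - wy‖ ^ 2`. The PL inequality turns `‖g‖ ^ 2`
into the contraction factor, `‖wy‖ ^ 2` is the negative term, and `‖g - wy‖ ^ 2` splits through
`gy xb yb` into the `x`-displacement and the gradient estimation error.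
-/

open scoped BigOperators

/-- The descent lemma (lower form): a function whose gradient is `L`-Lipschitz lies above its
first-order expansion minus `L / 2 * ‖v‖ ^ 2`. -/
theorem quadratic_lower_bound {E : Type*} [NormedAddCommGroup E] [InnerProductSpace ℝ E]
    [CompleteSpace E] {h : E → ℝ} {g : E → E} {L : ℝ}
    (hg : ∀ y, HasGradientAt h (g y) y) (hL : ∀ y₁ y₂, ‖g y₁ - g y₂‖ ≤ L * ‖y₁ - y₂‖) (y v : E) :
    h y + inner ℝ (g y) v - L / 2 * ‖v‖ ^ 2 ≤ h (y + v) := by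
  -- The gap along the segment, `t ↦ h (y + t • v) - (lower quadratic)`, is monotone on `[0, 1]`.
  let φ : ℝ → ℝ := fun t => h (y + t • v) - t * inner ℝ (g y) v + L / 2 * ‖v‖ ^ 2 * t ^ 2
  have hφ : ∀ t, HasDerivAt φ
      (inner ℝ (g (y + t • v)) v - inner ℝ (g y) v + L * ‖v‖ ^ 2 * t) t := by
    intro t
    have h1 : HasDerivAt (fun s : ℝ => y + s • v) v t := by
      simpa using ((hasDerivAt_id t).smul_const v).const_add y
    have h2 : HasDerivAt (fun s : ℝ => h (y + s • v)) (inner ℝ (g (y + t • v)) v) t := by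
      simpa [Function.comp_def] using! (hg (y + t • v)).hasFDerivAt.comp_hasDerivAt t h1
    have h3 := (h2.sub ((hasDerivAt_id t).mul_const (inner ℝ (g y) v))).add
      (((hasDerivAt_id t).pow 2).const_mul (L / 2 * ‖v‖ ^ 2))
    refine h3.congr_deriv ?_
    simp only [id, one_mul, mul_one, Nat.cast_ofNat]
    ring
  have hmono : MonotoneOn φ (Set.Icc 0 1) := by
    refine monotoneOn_of_deriv_nonneg (convex_Icc 0 1)
      (fun t _ => (hφ t).continuousAt.continuousWithinAt)
      (fun t _ => (hφ t).differentiableAt.differentiableWithinAt) fun t ht => ?_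
    rw [interior_Icc] at ht
    rw [(hφ t).deriv, ← inner_sub_left]
    have h1 := neg_le_of_abs_le (abs_real_inner_le_norm (g (y + t • v) - g y) v)
    have h2 := hL (y + t • v) y
    rw [add_sub_cancel_left, norm_smul, Real.norm_of_nonneg ht.1.le] at h2
    nlinarith [mul_le_mul_of_nonneg_right h2 (norm_nonneg v)]
  have h01 := hmono (Set.left_mem_Icc.2 zero_le_one) (Set.right_mem_Icc.2 zero_le_one) zero_le_one
  simp only [φ, zero_smul, one_smul, add_zero] at h01
  linarith

/-- descent of the residual `F(x̄₊) - f(x̄₊, y)` along one dual ascent step. -/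
theorem stmt_14 {d p : ℕ}
    (f : EuclideanSpace ℝ (Fin d) → EuclideanSpace ℝ (Fin p) → ℝ)
    (gx : EuclideanSpace ℝ (Fin d) → EuclideanSpace ℝ (Fin p) → EuclideanSpace ℝ (Fin d))
    (gy : EuclideanSpace ℝ (Fin d) → EuclideanSpace ℝ (Fin p) → EuclideanSpace ℝ (Fin p))
    (ystar : EuclideanSpace ℝ (Fin d) → EuclideanSpace ℝ (Fin p))
    (Lf μ : ℝ) (hLf : 0 < Lf) (hμ : 0 < μ)
    -- blockwise L_f-smoothness of f
    (hgx : ∀ x y, HasGradientAt (fun x' => f x' y) (gx x y) x)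
    (hgy : ∀ x y, HasGradientAt (fun y' => f x y') (gy x y) y)
    (hxx : ∀ x₁ x₂ y, ‖gx x₁ y - gx x₂ y‖ ≤ Lf * ‖x₁ - x₂‖)
    (hxy : ∀ x y₁ y₂, ‖gx x y₁ - gx x y₂‖ ≤ Lf * ‖y₁ - y₂‖)
    (hyx : ∀ x₁ x₂ y, ‖gy x₁ y - gy x₂ y‖ ≤ Lf * ‖x₁ - x₂‖)
    (hyy : ∀ x y₁ y₂, ‖gy x y₁ - gy x y₂‖ ≤ Lf * ‖y₁ - y₂‖)
    -- `ystar x` attains the supremum of `f x ·`, and PL condition for maximization holds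
    (hmax : ∀ x y, f x y ≤ f x (ystar x))
    (hPL : ∀ x y, 2 * μ * (f x (ystar x) - f x y) ≤ ‖gy x y‖ ^ 2)
    (xb xbp : EuclideanSpace ℝ (Fin d)) (yb : EuclideanSpace ℝ (Fin p))
    (wy : EuclideanSpace ℝ (Fin p))
    (η lam : ℝ) (hη : η ∈ Set.Ioc (0 : ℝ) 1) (hlam : 0 < lam)
    (yh ybp : EuclideanSpace ℝ (Fin p))
    (hyh : yh = yb + lam • wy) (hybp : ybp = yb + η • (yh - yb)) :
    f xbp (ystar xbp) - f xbp ybp ≤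
      (1 - η * lam * μ) * (f xbp (ystar xbp) - f xbp yb) -
        η / (2 * lam) * ‖yh - yb‖ ^ 2 + η * lam * Lf ^ 2 * ‖xbp - xb‖ ^ 2 +
        η * lam * ‖gy xb yb - wy‖ ^ 2 + Lf * η ^ 2 / 2 * ‖yh - yb‖ ^ 2 := by
  obtain ⟨hη0, -⟩ := hη
  have hd : yh - yb = lam • wy := by rw [hyh, add_sub_cancel_left]
  have hdesc := quadratic_lower_bound (hgy xbp) (hyy xbp) yb (η • (yh - yb))
  rw [← hybp] at hdesc
  have hn : ‖yh - yb‖ ^ 2 = lam ^ 2 * ‖wy‖ ^ 2 := by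
    rw [hd, norm_smul, mul_pow, Real.norm_of_nonneg hlam.le]
  have hηn : ‖η • (yh - yb)‖ ^ 2 = η ^ 2 * ‖yh - yb‖ ^ 2 := by
    rw [norm_smul, mul_pow, Real.norm_of_nonneg hη0.le]
  have hin : inner ℝ (gy xbp yb) (η • (yh - yb)) = η * lam * inner ℝ (gy xbp yb) wy := by
    rw [hd, real_inner_smul_right, real_inner_smul_right, mul_assoc]
  have hpol := norm_sub_sq_real (gy xbp yb) wy
  have herr : ‖gy xbp yb - wy‖ ^ 2 ≤
      2 * (Lf ^ 2 * ‖xbp - xb‖ ^ 2) + 2 * ‖gy xb yb - wy‖ ^ 2 := by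
    have h1 : ‖gy xbp yb - wy‖ ≤ Lf * ‖xbp - xb‖ + ‖gy xb yb - wy‖ :=
      (norm_sub_le_norm_sub_add_norm_sub _ (gy xb yb) _).trans (by gcongr; exact hyx _ _ _)
    have h2 := pow_le_pow_left₀ (norm_nonneg _) h1 2
    nlinarith [sq_nonneg (Lf * ‖xbp - xb‖ - ‖gy xb yb - wy‖)]
  have hquad : η / (2 * lam) * ‖yh - yb‖ ^ 2 = η * lam / 2 * ‖wy‖ ^ 2 := by
    rw [hn]
    field_simp
  have hkey : μ * (f xbp (ystar xbp) - f xbp yb) + ‖wy‖ ^ 2 / 2 - Lf ^ 2 * ‖xbp - xb‖ ^ 2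
      - ‖gy xb yb - wy‖ ^ 2 ≤ inner ℝ (gy xbp yb) wy := by
    linarith [hPL xbp yb]
  have hscaled := mul_le_mul_of_nonneg_left hkey (mul_pos hη0 hlam).le
  rw [hin, hηn] at hdesc
  rw [hquad]
  linarith
end

section
/- For i ∈ [m], let f^i : ℝ^d × ℝ^p → ℝ be differentiable and blockwise L_f-smooth, set f = (1/m)∑_{i=1}^m f^i, and let F(x) = max_{y'} f(x,y') be attained for every x with maximizer y*(x), with F differentiable and ∇F(x̄) = (1/m)∑_{i=1}^m ∇_x f^i(x̄, y*(x̄)); suppose the quadratic-growth bound ∥ȳ − y*(x̄)∥² ≤ (2/μ)(F(x̄) − f(x̄, ȳ)) holds. Then for any points x^1, …, x^m ∈ ℝ^d, y^1, …, y^m ∈ ℝ^p with averages x̄ = (1/m)∑_i x^i and ȳ = (1/m)∑_i y^i, and any vector u ∈ ℝ^d: −∥u − (1/m)∑_{i=1}^m ∇_x f^i(x^i, y^i)∥² ≤ −(1/2)∥u − ∇F(x̄)∥² + (2L_f²/m)∑_{i=1}^m (∥x^i − x̄∥² + 2∥y^i − ȳ∥²) + (8L_f²/μ)(F(x̄) −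 f(x̄, ȳ)). -/
/-!
Write `g` for the averaged local gradient and `G = ∇F(x̄)`. Young's inequality gives
`‖u - G‖² ≤ 2‖u - g‖² + 2‖g - G‖²`, so it remains to bound `‖g - G‖²`. By Jensen this is at most
the average of `‖∇ₓfⁱ(xⁱ, yⁱ) - ∇ₓfⁱ(x̄, y*(x̄))‖²`, and blockwise smoothness along
`(xⁱ, yⁱ) → (x̄, yⁱ) → (x̄, ȳ) → (x̄, y*(x̄))` bounds each term by
`L_f² (2‖xⁱ - x̄‖² + 4‖yⁱ - ȳ‖² + 4‖ȳ - y*(x̄)‖²)`. Quadratic growth controls the last summand.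
-/


open scoped BigOperators

theorem norm_average_sq_le {E : Type*} [NormedAddCommGroup E] [NormedSpace ℝ E] {m : ℕ}
    (hm : 0 < m) (v : Fin m → E) :
    ‖(m : ℝ)⁻¹ • ∑ i, v i‖ ^ 2 ≤ (m : ℝ)⁻¹ * ∑ i, ‖v i‖ ^ 2 := by
  have hm' : (0 : ℝ) < m := by exact_mod_cast hm
  have h1 : ‖∑ i, v i‖ ^ 2 ≤ m * ∑ i, ‖v i‖ ^ 2 := by
    calc ‖∑ i, v i‖ ^ 2 ≤ (∑ i, ‖v i‖) ^ 2 := by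
          gcongr
          exact norm_sum_le _ _
      _ ≤ m * ∑ i, ‖v i‖ ^ 2 := by
          simpa using sq_sum_le_card_mul_sum_sq (s := Finset.univ) (f := fun i => ‖v i‖)
  calc ‖(m : ℝ)⁻¹ • ∑ i, v i‖ ^ 2 = ((m : ℝ)⁻¹) ^ 2 * ‖∑ i, v i‖ ^ 2 := by
        rw [norm_smul, mul_pow, Real.norm_of_nonneg (by positivity)]
    _ ≤ ((m : ℝ)⁻¹) ^ 2 * (m * ∑ i, ‖v i‖ ^ 2) := by gcongr
    _ = (m : ℝ)⁻¹ * ∑ i, ‖v i‖ ^ 2 := by field_simp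

theorem half_norm_sub_sq_le {E : Type*} [SeminormedAddCommGroup E] (u g G : E) :
    1 / 2 * ‖u - G‖ ^ 2 ≤ ‖u - g‖ ^ 2 + ‖g - G‖ ^ 2 := by
  have h := norm_sub_le_norm_sub_add_norm_sub u g G
  nlinarith [sq_nonneg (‖u - g‖ - ‖g - G‖), norm_nonneg (u - G)]

/-- bound relating the deviation of a vector `u` from the averaged local
gradients to its deviation from `∇F(x̄)`, plus consensus and residual terms. -/
theorem stmt_15 {d p m : ℕ} (hm : 0 < m)
    (f : Fin m → EuclideanSpace ℝ (Fin d) → EuclideanSpace ℝ (Fin p) → ℝ)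
    (gx : Fin m → EuclideanSpace ℝ (Fin d) → EuclideanSpace ℝ (Fin p) →
      EuclideanSpace ℝ (Fin d))
    (gy : Fin m → EuclideanSpace ℝ (Fin d) → EuclideanSpace ℝ (Fin p) →
      EuclideanSpace ℝ (Fin p))
    (ystar : EuclideanSpace ℝ (Fin d) → EuclideanSpace ℝ (Fin p))
    (Lf μ : ℝ) (hLf : 0 < Lf) (hμ : 0 < μ)
    -- each `f i` is differentiable and blockwise L_f-smooth
    (hgx : ∀ i x y, HasGradientAt (fun x' => f i x' y) (gx i x y) x)
    (hgy : ∀ i x y, HasGradientAt (fun y' => f i x y') (gy i x y) y)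
    (hxx : ∀ i x₁ x₂ y, ‖gx i x₁ y - gx i x₂ y‖ ≤ Lf * ‖x₁ - x₂‖)
    (hxy : ∀ i x y₁ y₂, ‖gx i x y₁ - gx i x y₂‖ ≤ Lf * ‖y₁ - y₂‖)
    (hyx : ∀ i x₁ x₂ y, ‖gy i x₁ y - gy i x₂ y‖ ≤ Lf * ‖x₁ - x₂‖)
    (hyy : ∀ i x y₁ y₂, ‖gy i x y₁ - gy i x y₂‖ ≤ Lf * ‖y₁ - y₂‖)
    -- `ystar x` maximizes `y ↦ (1/m) ∑ i, f i x y`, so `F x = (1/m) ∑ i, f i x (ystar x)`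
    (hmax : ∀ x y, (m : ℝ)⁻¹ * ∑ i, f i x y ≤ (m : ℝ)⁻¹ * ∑ i, f i x (ystar x))
    -- `F` is differentiable with `∇F x = (1/m) ∑ i, ∇ₓ f i (x, ystar x)`
    (hgF : ∀ x, HasGradientAt (fun x' => (m : ℝ)⁻¹ * ∑ i, f i x' (ystar x'))
      ((m : ℝ)⁻¹ • ∑ i, gx i x (ystar x)) x)
    -- quadratic growth bound
    (hQG : ∀ x y, ‖y - ystar x‖ ^ 2 ≤
      2 / μ * ((m : ℝ)⁻¹ * ∑ i, f i x (ystar x) - (m : ℝ)⁻¹ * ∑ i, f i x y))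
    (x : Fin m → EuclideanSpace ℝ (Fin d)) (y : Fin m → EuclideanSpace ℝ (Fin p))
    (u : EuclideanSpace ℝ (Fin d)) :
    -‖u - (m : ℝ)⁻¹ • ∑ i, gx i (x i) (y i)‖ ^ 2 ≤
      -(1 / 2) * ‖u - (m : ℝ)⁻¹ • ∑ i, gx i ((m : ℝ)⁻¹ • ∑ k, x k)
          (ystar ((m : ℝ)⁻¹ • ∑ k, x k))‖ ^ 2 +
        2 * Lf ^ 2 / m * ∑ i, (‖x i - (m : ℝ)⁻¹ • ∑ k, x k‖ ^ 2 +
          2 * ‖y i - (m : ℝ)⁻¹ • ∑ k, y k‖ ^ 2) +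
        8 * Lf ^ 2 / μ *
          ((m : ℝ)⁻¹ * ∑ i, f i ((m : ℝ)⁻¹ • ∑ k, x k) (ystar ((m : ℝ)⁻¹ • ∑ k, x k)) -
            (m : ℝ)⁻¹ * ∑ i, f i ((m : ℝ)⁻¹ • ∑ k, x k) ((m : ℝ)⁻¹ • ∑ k, y k)) := by
  have hm' : (0 : ℝ) < m := by exact_mod_cast hm
  set X := (m : ℝ)⁻¹ • ∑ k, x k
  set Y := (m : ℝ)⁻¹ • ∑ k, y k
  set G := (m : ℝ)⁻¹ • ∑ i, gx i X (ystar X) with hG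
  set g := (m : ℝ)⁻¹ • ∑ i, gx i (x i) (y i) with hg
  have hQ := hQG X Y
  set gap := (m : ℝ)⁻¹ * ∑ i, f i X (ystar X) - (m : ℝ)⁻¹ * ∑ i, f i X Y
  have hterm : ∀ i, ‖gx i (x i) (y i) - gx i X (ystar X)‖ ^ 2 ≤
      2 * Lf ^ 2 * (‖x i - X‖ ^ 2 + 2 * ‖y i - Y‖ ^ 2) + 4 * Lf ^ 2 * ‖Y - ystar X‖ ^ 2 := by
    intro i
    have h : ‖gx i (x i) (y i) - gx i X (ystar X)‖ ≤
        Lf * (‖x i - X‖ + (‖y i - Y‖ + ‖Y - ystar X‖)) := by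
      calc _ ≤ ‖gx i (x i) (y i) - gx i X (y i)‖ + ‖gx i X (y i) - gx i X (ystar X)‖ :=
            norm_sub_le_norm_sub_add_norm_sub _ _ _
        _ ≤ Lf * ‖x i - X‖ + Lf * ‖y i - ystar X‖ := add_le_add (hxx _ _ _ _) (hxy _ _ _ _)
        _ ≤ Lf * ‖x i - X‖ + Lf * (‖y i - Y‖ + ‖Y - ystar X‖) := by
            gcongr
            exact norm_sub_le_norm_sub_add_norm_sub _ _ _
        _ = _ := by ring
    -- the asymmetric split `(a + (b + c))² ≤ 2a² + 2(b + c)² ≤ 2a² + 4b² + 4c²`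
    have hs : (‖x i - X‖ + (‖y i - Y‖ + ‖Y - ystar X‖)) ^ 2 ≤
        2 * ‖x i - X‖ ^ 2 + 4 * ‖y i - Y‖ ^ 2 + 4 * ‖Y - ystar X‖ ^ 2 := by
      nlinarith [sq_nonneg (‖x i - X‖ - (‖y i - Y‖ + ‖Y - ystar X‖)),
        sq_nonneg (‖y i - Y‖ - ‖Y - ystar X‖)]
    calc _ ≤ (Lf * (‖x i - X‖ + (‖y i - Y‖ + ‖Y - ystar X‖))) ^ 2 := by gcongr
      _ = Lf ^ 2 * (‖x i - X‖ + (‖y i - Y‖ + ‖Y - ystar X‖)) ^ 2 := by ring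
      _ ≤ Lf ^ 2 * (2 * ‖x i - X‖ ^ 2 + 4 * ‖y i - Y‖ ^ 2 + 4 * ‖Y - ystar X‖ ^ 2) := by
          gcongr
      _ = _ := by ring
  have hdiff : ‖g - G‖ ^ 2 ≤
      2 * Lf ^ 2 / m * ∑ i, (‖x i - X‖ ^ 2 + 2 * ‖y i - Y‖ ^ 2) + 8 * Lf ^ 2 / μ * gap := by
    calc ‖g - G‖ ^ 2 = ‖(m : ℝ)⁻¹ • ∑ i, (gx i (x i) (y i) - gx i X (ystar X))‖ ^ 2 := by
          rw [hg, hG, Finset.sum_sub_distrib, smul_sub]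
      _ ≤ (m : ℝ)⁻¹ * ∑ i, ‖gx i (x i) (y i) - gx i X (ystar X)‖ ^ 2 := norm_average_sq_le hm _
      _ ≤ (m : ℝ)⁻¹ * ∑ i, (2 * Lf ^ 2 * (‖x i - X‖ ^ 2 + 2 * ‖y i - Y‖ ^ 2) +
            4 * Lf ^ 2 * ‖Y - ystar X‖ ^ 2) := by
          gcongr with i
          exact hterm i
      _ = 2 * Lf ^ 2 / m * ∑ i, (‖x i - X‖ ^ 2 + 2 * ‖y i - Y‖ ^ 2) +
            4 * Lf ^ 2 * ‖Y - ystar X‖ ^ 2 := by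
          rw [Finset.sum_add_distrib, ← Finset.mul_sum, Finset.sum_const, Finset.card_univ,
            Fintype.card_fin, nsmul_eq_mul]
          field_simp
      _ ≤ 2 * Lf ^ 2 / m * ∑ i, (‖x i - X‖ ^ 2 + 2 * ‖y i - Y‖ ^ 2) +
            4 * Lf ^ 2 * (2 / μ * gap) := by gcongr
      _ = _ := by ring
  linarith [half_norm_sub_sq_le u g G]
end

section
/- Let F : ℝ^d → ℝ be differentiable with L-Lipschitz gradient. Let x^1, …, x^m, w^1, …, w^m ∈ ℝ^d with averages x̄ = (1/m)∑_i x^i and w̄ = (1/m)∑_i w^i. Then −∥w̄ − ∇F(x̄)∥² ≤ −(1/(3m))∑_{i=1}^m ∥w^i − ∇F(x^i)∥² + (1/m)∑_{i=1}^m ∥w^i − w̄∥² + (L²/m)∑_{i=1}^m ∥x^i − x̄∥². -/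
open scoped BigOperators

/-!
Write `w i - ∇F(x i) = (w i - w̄) + (w̄ - ∇F(x̄)) + (∇F(x̄) - ∇F(x i))`. By
`‖a + b + c‖² ≤ 3 (‖a‖² + ‖b‖² + ‖c‖²)` and the Lipschitz bound on the last term,
`‖w i - ∇F(x i)‖² ≤ 3 (‖w i - w̄‖² + ‖w̄ - ∇F(x̄)‖² + L² ‖x i - x̄‖²)`.
Averaging over `i` and dividing by `3` gives the claim. Nothing about `w̄` and `x̄` is used
beyond their being fixed vectors.
-/

theorem norm_add_three_sq_le {E : Type*} [SeminormedAddCommGroup E] (a b c : E) :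
    ‖a + b + c‖ ^ 2 ≤ 3 * (‖a‖ ^ 2 + ‖b‖ ^ 2 + ‖c‖ ^ 2) := by
  have h : ‖a + b + c‖ ≤ ‖a‖ + ‖b‖ + ‖c‖ := norm_add₃_le
  have h2 := pow_le_pow_left₀ (norm_nonneg _) h 2
  nlinarith [sq_nonneg (‖a‖ - ‖b‖), sq_nonneg (‖b‖ - ‖c‖), sq_nonneg (‖a‖ - ‖c‖)]

/-- bound of `-‖w̄ - ∇F(x̄)‖²` by local tracking errors, consensus errors of
`w`, and consensus errors of `x`. -/
theorem stmt_16 {d m : ℕ}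
    (F : EuclideanSpace ℝ (Fin d) → ℝ)
    (gF : EuclideanSpace ℝ (Fin d) → EuclideanSpace ℝ (Fin d))
    (L : ℝ) (hL : 0 < L)
    (hgF : ∀ x, HasGradientAt F (gF x) x)
    (hLip : ∀ x₁ x₂, ‖gF x₁ - gF x₂‖ ≤ L * ‖x₁ - x₂‖)
    (x w : Fin m → EuclideanSpace ℝ (Fin d)) :
    -‖(m : ℝ)⁻¹ • ∑ i, w i - gF ((m : ℝ)⁻¹ • ∑ k, x k)‖ ^ 2 ≤
      -(1 / (3 * m)) * ∑ i, ‖w i - gF (x i)‖ ^ 2 +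
        (m : ℝ)⁻¹ * ∑ i, ‖w i - (m : ℝ)⁻¹ • ∑ k, w k‖ ^ 2 +
        L ^ 2 / m * ∑ i, ‖x i - (m : ℝ)⁻¹ • ∑ k, x k‖ ^ 2 := by
  rcases Nat.eq_zero_or_pos m with rfl | hm
  -- For `m = 0` every sum is empty, so the right-hand side is `0`.
  · simp
  generalize (m : ℝ)⁻¹ • ∑ k, w k = wb
  generalize (m : ℝ)⁻¹ • ∑ k, x k = xb
  have hm' : (0 : ℝ) < m := by exact_mod_cast hm
  have key : ∀ i, ‖w i - gF (x i)‖ ^ 2 ≤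
      3 * (‖w i - wb‖ ^ 2 + ‖wb - gF xb‖ ^ 2 + L ^ 2 * ‖x i - xb‖ ^ 2) := by
    intro i
    have h := norm_add_three_sq_le (w i - wb) (wb - gF xb) (gF xb - gF (x i))
    have e : w i - wb + (wb - gF xb) + (gF xb - gF (x i)) = w i - gF (x i) := by abel
    have h2 := pow_le_pow_left₀ (norm_nonneg _) (hLip xb (x i)) 2
    rw [mul_pow, norm_sub_rev xb] at h2
    rw [e] at h
    linarith
  have hsum := Finset.sum_le_sum fun i (_ : i ∈ Finset.univ) => key i
  rw [← Finset.mul_sum, Finset.sum_add_distrib, Finset.sum_add_distrib, ← Finset.mul_sum,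
    Finset.sum_const, Finset.card_univ, Fintype.card_fin, nsmul_eq_mul] at hsum
  have hdiv := mul_le_mul_of_nonneg_left hsum (by positivity : (0 : ℝ) ≤ 1 / (3 * m))
  have e : ∀ W A X : ℝ, 1 / (3 * (m : ℝ)) * (3 * (W + m * A + L ^ 2 * X)) =
      (m : ℝ)⁻¹ * W + A + L ^ 2 / m * X := by
    intro W A X
    field_simp
  rw [e] at hdiv
  linarith
end
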